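/- arXiv:2001.11061 — 4 statements merged into one kernel-verified Lean document; each statement's English description precedes it below -/
import Mathlib

section
/- Let d ≥ 0, n = 3+d, write y = (y₁,y₂,y₃,y'') ∈ ℝ³ × ℝ^d, and let m < −1. Let a₁, a₂ : ℝ × ℝ^{n−1} → ℂ be symbols of order m with smooth parameters, and define v₁(y) = ∫_ℝ e^{i y₁ η} a₁(η, (y₂,y₃,y'')) dη, v₂(y) = ∫_ℝ e^{i y₂ η} a₂(η, (y₁,y₃,y'')) dη, and w₁₂(y) = ∫_{ℝ²} e^{i(y₁η₁+y₂η₂)} a₁(η₁,(0,y₃,y'')) a₂(η₂,(0,y₃,y'')) dη₁dη₂ (all integrals absolutely convergent since m < −1). Then for every φ ∈ C_c^∞(ℝⁿ), every k₃ ≥ 0 and every δ > 0 there are measurable e₁, e₂ with 𝓕(φ·(v₁v₂ − w₁₂)) = e₁ + e₂ such that W_{−m+1/2, −m−1/2, k₃, δ}·e₁ ∈ L²(ℝⁿ) and W_{−m−1/2, −m+1/2, k₃, δ}·e₂ ∈ L²(ℝⁿ). -/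
open MeasureTheory
open scoped RealInnerProductSpace

noncomputable section

/-- Space `ℝⁿ` with `n = 3 + d`, written as `y = (y₁, y₂, y₃, y'')`. -/
abbrev Sp (d : ℕ) : Type := ℝ × ℝ × ℝ × EuclideanSpace ℝ (Fin d)

/-- The parameter space `ℝ^{n-1} = ℝ² × ℝᵈ`. -/
abbrev Par (d : ℕ) : Type := ℝ × ℝ × EuclideanSpace ℝ (Fin d)

/-- A symbol of order `m` with smooth parameters: `a(η, w)` is smooth and every
mixed derivative `∂_w^α ∂_η^β a` is bounded by `C (1+|η|)^{m-β}`. -/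
def IsSymbolP (d : ℕ) (m : ℝ) (a : ℝ × Par d → ℂ) : Prop :=
  ContDiff ℝ (⊤ : ℕ∞) a ∧ ∀ α β : ℕ, ∃ C : ℝ, ∀ (η : ℝ) (w : Par d),
    ‖iteratedFDeriv ℝ α (fun w' => iteratedDeriv β (fun η' => a (η', w')) η) w‖ ≤
      C * (1 + |η|) ^ (m - β)

/-- The anisotropic weight
`W_{k₁,k₂,k₃,δ}(η) = ⟨(η₁,η'')⟩^{k₁} ⟨(η₂,η'')⟩^{k₂} ⟨(η₃,η'')⟩^{k₃} ⟨η⟩^{-δ}`. -/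
def W (d : ℕ) (k₁ k₂ k₃ δ : ℝ) (η : Sp d) : ℝ :=
  (1 + η.1 ^ 2 + ‖η.2.2.2‖ ^ 2) ^ (k₁ / 2) *
  (1 + η.2.1 ^ 2 + ‖η.2.2.2‖ ^ 2) ^ (k₂ / 2) *
  (1 + η.2.2.1 ^ 2 + ‖η.2.2.2‖ ^ 2) ^ (k₃ / 2) *
  (1 + η.1 ^ 2 + η.2.1 ^ 2 + η.2.2.1 ^ 2 + ‖η.2.2.2‖ ^ 2) ^ (-δ / 2)

/-- The Euclidean pairing `⟨y, η⟩` on `ℝⁿ = ℝ³ × ℝᵈ`. -/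
def pairing (d : ℕ) (y η : Sp d) : ℝ :=
  y.1 * η.1 + y.2.1 * η.2.1 + y.2.2.1 * η.2.2.1 + ⟪y.2.2.2, η.2.2.2⟫

/-- The Fourier transform `𝓕u(η) = ∫ e^{-i⟨y,η⟩} u(y) dy`. -/
def FT (d : ℕ) (u : Sp d → ℂ) (η : Sp d) : ℂ :=
  ∫ y : Sp d, Complex.exp (-(Complex.I * (pairing d y η : ℂ))) * u y ∂volume

/-- The conormal wave `v₁(y) = ∫ e^{i y₁ η} a(η, (y₂,y₃,y'')) dη`. -/
def v1 (d : ℕ) (a : ℝ × Par d → ℂ) (y : Sp d) : ℂ :=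
  ∫ η : ℝ, Complex.exp (Complex.I * ((y.1 * η : ℝ) : ℂ)) * a (η, (y.2.1, y.2.2.1, y.2.2.2))

/-- The conormal wave `v₂(y) = ∫ e^{i y₂ η} a(η, (y₁,y₃,y'')) dη`. -/
def v2 (d : ℕ) (a : ℝ × Par d → ℂ) (y : Sp d) : ℂ :=
  ∫ η : ℝ, Complex.exp (Complex.I * ((y.2.1 * η : ℝ) : ℂ)) * a (η, (y.1, y.2.2.1, y.2.2.2))

/-- The product-type conormal distribution
`w₁₂(y) = ∫_{ℝ²} e^{i(y₁η₁+y₂η₂)} a₁(η₁,(0,y₃,y'')) a₂(η₂,(0,y₃,y'')) dη₁dη₂`. -/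
def w12 (d : ℕ) (a₁ a₂ : ℝ × Par d → ℂ) (y : Sp d) : ℂ :=
  ∫ η : ℝ × ℝ,
    Complex.exp (Complex.I * ((y.1 * η.1 + y.2.1 * η.2 : ℝ) : ℂ)) *
      a₁ (η.1, ((0 : ℝ), y.2.2.1, y.2.2.2)) * a₂ (η.2, ((0 : ℝ), y.2.2.1, y.2.2.2))



open scoped ContDiff FourierTransform

/-- pairing as a continuous bilinear map -/
def pairL (d : ℕ) : Sp d →L[ℝ] Sp d →L[ℝ] ℝ :=
  let p1 : Sp d →L[ℝ] ℝ := ContinuousLinearMap.fst ℝ _ _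
  let q1 : Sp d →L[ℝ] (ℝ × ℝ × EuclideanSpace ℝ (Fin d)) := ContinuousLinearMap.snd ℝ _ _
  let p2 : Sp d →L[ℝ] ℝ := (ContinuousLinearMap.fst ℝ _ _).comp q1
  let q2 : Sp d →L[ℝ] (ℝ × EuclideanSpace ℝ (Fin d)) := (ContinuousLinearMap.snd ℝ _ _).comp q1
  let p3 : Sp d →L[ℝ] ℝ := (ContinuousLinearMap.fst ℝ _ _).comp q2
  let p4 : Sp d →L[ℝ] EuclideanSpace ℝ (Fin d) := (ContinuousLinearMap.snd ℝ _ _).comp q2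
  (ContinuousLinearMap.mul ℝ ℝ).bilinearComp p1 p1 +
  (ContinuousLinearMap.mul ℝ ℝ).bilinearComp p2 p2 +
  (ContinuousLinearMap.mul ℝ ℝ).bilinearComp p3 p3 +
  ((isBoundedBilinearMap_inner (𝕜 := ℝ) (E := EuclideanSpace ℝ (Fin d))).toContinuousLinearMap).bilinearComp p4 p4

lemma pairL_apply (d : ℕ) (y η : Sp d) : pairL d y η = pairing d y η := by
  simp [pairL, pairing]

instance haarSp (d : ℕ) : (volume : Measure (Sp d)).IsAddHaarMeasure := by
  have h1 : (volume : Measure (ℝ × EuclideanSpace ℝ (Fin d))).IsAddHaarMeasure :=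
    Measure.prod.instIsAddHaarMeasure _ _
  have h2 : (volume : Measure (ℝ × ℝ × EuclideanSpace ℝ (Fin d))).IsAddHaarMeasure :=
    Measure.prod.instIsAddHaarMeasure _ _
  exact Measure.prod.instIsAddHaarMeasure _ _

lemma FT_eq (d : ℕ) (g : Sp d → ℂ) (ξ : Sp d) :
    FT d g ξ = VectorFourier.fourierIntegral 𝐞 volume
      (((2 * Real.pi)⁻¹ • pairL d).toLinearMap₁₂) g ξ := by
  unfold FT VectorFourier.fourierIntegral
  refine integral_congr_ae (Filter.Eventually.of_forall fun y => ?_)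
  have h : (2 * Real.pi) * -((2 * Real.pi)⁻¹ * pairing d y ξ) = - pairing d y ξ := by
    field_simp
  have h2 : (((2 * Real.pi)⁻¹ • pairL d).toLinearMap₁₂) y ξ =
      (2 * Real.pi)⁻¹ * pairing d y ξ := by
    rw [← pairL_apply]
    rfl
  simp only [h2, Circle.smul_def, Real.fourierChar_apply, h, smul_eq_mul]
  congr 2
  push_cast
  ring

lemma FT_pow_bound (d : ℕ) (K : Set (Sp d)) (hK : IsCompact K) (n : ℕ) :
    ∃ D : ℝ, 0 ≤ D ∧ ∀ (g : Sp d → ℂ) (M : ℝ), ContDiff ℝ ∞ g → tsupport g ⊆ K →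
      0 ≤ M → (∀ k ≤ n, ∀ y, ‖iteratedFDeriv ℝ k g y‖ ≤ M) →
      ∀ ξ v : Sp d, ‖v‖ ≤ 1 → |pairing d v ξ| ^ n * ‖FT d g ξ‖ ≤ D * M := by
  refine ⟨(2 * Real.pi) ^ n * (2 ^ n * ((n + 1) * volume.real K)), by positivity, ?_⟩
  intro g M hg hsupp hM hb ξ v hv
  have hcs : HasCompactSupport g := hK.of_isClosed_subset (isClosed_tsupport g) hsupp
  have hcont : ∀ j : ℕ, Continuous (iteratedFDeriv ℝ j g) := fun j =>
    hg.continuous_iteratedFDeriv (mod_cast le_top)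
  have hint : ∀ (k j : ℕ), (k : ℕ∞) ≤ 0 → (j : ℕ∞) ≤ ⊤ →
      Integrable (fun v ↦ ‖v‖ ^ k * ‖iteratedFDeriv ℝ j g v‖) volume := by
    intro k j _ _
    refine Continuous.integrable_of_hasCompactSupport ?_ ?_
    · exact (continuous_norm.pow k).mul (hcont j).norm
    · exact (hcs.iteratedFDeriv j).norm.mul_left
  have key := VectorFourier.pow_mul_norm_iteratedFDeriv_fourierIntegral_le
    ((2 * Real.pi)⁻¹ • pairL d) (μ := volume) (K := 0) (N := ⊤) hg hint (k := 0) (n := n)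
    (by simp) (by simp) v ξ
  rw [norm_iteratedFDeriv_zero, ← FT_eq] at key
  have hone : ∀ j ≤ n, ∫ v, ‖v‖ ^ 0 * ‖iteratedFDeriv ℝ j g v‖ ≤ volume.real K * M := by
    intro j hj
    have h1 : ∫ v, ‖v‖ ^ 0 * ‖iteratedFDeriv ℝ j g v‖ = ∫ v in K, ‖iteratedFDeriv ℝ j g v‖ := by
      simp only [pow_zero, one_mul]
      symm
      apply setIntegral_eq_integral_of_forall_compl_eq_zero
      intro x hx
      have : x ∉ Function.support (iteratedFDeriv ℝ j g) := fun h =>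
        hx (hsupp (support_iteratedFDeriv_subset j h))
      simpa using this
    rw [h1]
    have h2 : ∫ v in K, ‖iteratedFDeriv ℝ j g v‖ ≤ ∫ v in K, M := by
      apply setIntegral_mono_on
      · exact (hcont j).norm.continuousOn.integrableOn_compact hK
      · exact continuousOn_const.integrableOn_compact hK
      · exact hK.measurableSet
      · intro x _
        exact hb j hj x
    simpa using h2
  have hsum : ∑ p ∈ Finset.range (0 + 1) ×ˢ Finset.range (n + 1),
      ∫ v, ‖v‖ ^ p.1 * ‖iteratedFDeriv ℝ p.2 g v‖ ≤ (n + 1) * (volume.real K * M) := by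
    have : ∀ p ∈ Finset.range (0 + 1) ×ˢ Finset.range (n + 1),
      ∫ v, ‖v‖ ^ p.1 * ‖iteratedFDeriv ℝ p.2 g v‖ ≤ volume.real K * M := by
      rintro ⟨a, b⟩ hp
      simp only [Finset.mem_product, Finset.mem_range] at hp
      obtain rfl : a = 0 := by omega
      exact hone b (by omega)
    refine (Finset.sum_le_card_nsmul _ _ _ this).trans (le_of_eq ?_)
    simp
  have hL : |pairing d v ξ| ^ n =
      (2 * Real.pi) ^ n * |((2 * Real.pi)⁻¹ • pairL d) v ξ| ^ n := by
    rw [← mul_pow]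
    congr 1
    simp only [smul_apply, pairL_apply, smul_eq_mul, abs_mul, abs_inv]
    rw [abs_of_pos (by positivity : (0:ℝ) < 2), abs_of_pos Real.pi_pos]
    field_simp
  rw [hL, mul_assoc, mul_assoc, mul_assoc]
  refine mul_le_mul_of_nonneg_left ?_ (by positivity)
  refine key.trans ?_
  have hvn : ‖v‖ ^ n ≤ 1 := pow_le_one₀ (norm_nonneg _) hv
  simp only [pow_zero, mul_one, Nat.cast_zero, mul_zero, zero_add] at hsum ⊢
  have hs0 : 0 ≤ ∑ p ∈ Finset.range 1 ×ˢ Finset.range (n + 1),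
      ∫ v, ‖v‖ ^ p.1 * ‖iteratedFDeriv ℝ p.2 g v‖ :=
    Finset.sum_nonneg fun p _ => integral_nonneg fun v => by positivity
  calc _ ≤ 1 * 2 ^ n * ((n + 1) * (volume.real K * M)) := by gcongr
    _ = _ := by ring

lemma prod_four_le (N : ℕ) (t : Fin 4 → ℝ) (ht : ∀ i, 0 ≤ t i) :
    (1 + t 0) ^ N * (1 + t 1) ^ N * (1 + t 2) ^ N * (1 + t 3) ^ N ≤
      2 ^ (4 * N) * (1 + t 0 ^ (4 * N) + t 1 ^ (4 * N) + t 2 ^ (4 * N) + t 3 ^ (4 * N)) := by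
  obtain ⟨T, hT0, hT, hle⟩ : ∃ T : ℝ, 0 ≤ T ∧ (∀ i, 1 + t i ≤ 2 * T) ∧
      T ^ (4 * N) ≤ (1 + t 0 ^ (4 * N) + t 1 ^ (4 * N) + t 2 ^ (4 * N) + t 3 ^ (4 * N)) := by
    obtain ⟨j, hj⟩ := Finite.exists_max t
    have hp : ∀ i, 0 ≤ t i ^ (4 * N) := fun i => pow_nonneg (ht i) _
    by_cases h : t j ≤ 1
    · refine ⟨1, zero_le_one, fun i => by linarith [hj i], ?_⟩
      rw [one_pow]
      linarith [hp 0, hp 1, hp 2, hp 3]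
    · refine ⟨t j, ht j, fun i => by linarith [hj i], ?_⟩
      fin_cases j <;> simp <;> linarith [hp 0, hp 1, hp 2, hp 3]
  have h0 := ht 0
  have h1 := ht 1
  have h2 := ht 2
  have h3 := ht 3
  calc _ ≤ (2 * T) ^ N * (2 * T) ^ N * (2 * T) ^ N * (2 * T) ^ N := by
        gcongr <;> apply hT
    _ = 2 ^ (4 * N) * T ^ (4 * N) := by rw [← mul_pow 2 T]; ring
    _ ≤ _ := by gcongr

lemma FT_decay (d : ℕ) (K : Set (Sp d)) (hK : IsCompact K) (N : ℕ) :
    ∃ C : ℝ, 0 ≤ C ∧ ∀ (g : Sp d → ℂ) (M : ℝ), ContDiff ℝ ∞ g → tsupport g ⊆ K →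
      0 ≤ M → (∀ k ≤ 4 * N, ∀ y, ‖iteratedFDeriv ℝ k g y‖ ≤ M) →
      ∀ ξ : Sp d, (1 + |ξ.1|) ^ N * (1 + |ξ.2.1|) ^ N * (1 + |ξ.2.2.1|) ^ N *
        (1 + ‖ξ.2.2.2‖) ^ N * ‖FT d g ξ‖ ≤ C * M := by
  obtain ⟨D, hD, h⟩ := FT_pow_bound d K hK (4 * N)
  obtain ⟨D0, hD0, h0⟩ := FT_pow_bound d K hK 0
  refine ⟨2 ^ (4 * N) * (D0 + D + D + D + D), by positivity, ?_⟩
  intro g M hg hs hM hb ξ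
  have b0 := h0 g M hg hs hM (fun k hk => hb k (by omega)) ξ 0 (by simp)
  have b1 := h g M hg hs hM hb ξ (1, 0, 0, 0) (by simp [Prod.norm_def])
  have b2 := h g M hg hs hM hb ξ (0, 1, 0, 0) (by simp [Prod.norm_def])
  have b3 := h g M hg hs hM hb ξ (0, 0, 1, 0) (by simp [Prod.norm_def])
  have b4 := h g M hg hs hM hb ξ (0, 0, 0, ‖ξ.2.2.2‖⁻¹ • ξ.2.2.2) (by
    simp only [Prod.norm_def, norm_zero, norm_smul, norm_inv, norm_norm]
    simp only [sup_le_iff, zero_le_one, true_and]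
    exact inv_mul_le_one)
  have e4 : |pairing d (0, 0, 0, ‖ξ.2.2.2‖⁻¹ • ξ.2.2.2) ξ| = ‖ξ.2.2.2‖ := by
    simp only [pairing, zero_mul, zero_add, real_inner_smul_left, real_inner_self_eq_norm_sq]
    by_cases hz : ‖ξ.2.2.2‖ = 0
    · simp [hz]
    · rw [pow_two, ← mul_assoc, inv_mul_cancel₀ hz, one_mul, abs_norm]
  rw [e4] at b4
  simp only [pairing, one_mul, zero_mul, add_zero, zero_add, inner_zero_left, pow_zero] at b0 b1 b2 b3
  have hp := prod_four_le N ![|ξ.1|, |ξ.2.1|, |ξ.2.2.1|, ‖ξ.2.2.2‖] (by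
    intro i; fin_cases i <;> simp)
  simp at hp
  calc _ ≤ (2 ^ (4 * N) * (1 + |ξ.1| ^ (4 * N) + |ξ.2.1| ^ (4 * N) + |ξ.2.2.1| ^ (4 * N)
        + ‖ξ.2.2.2‖ ^ (4 * N))) * ‖FT d g ξ‖ := by gcongr
    _ = 2 ^ (4 * N) * (‖FT d g ξ‖ + |ξ.1| ^ (4 * N) * ‖FT d g ξ‖ + |ξ.2.1| ^ (4 * N) * ‖FT d g ξ‖
        + |ξ.2.2.1| ^ (4 * N) * ‖FT d g ξ‖ + ‖ξ.2.2.2‖ ^ (4 * N) * ‖FT d g ξ‖) := by ring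
    _ ≤ 2 ^ (4 * N) * (D0 * M + D * M + D * M + D * M + D * M) := by gcongr
    _ = _ := by ring


/-- parameter measure -/
def kap : Measure (ℝ × ℝ) := ((volume : Measure ℝ).restrict (Set.Icc 0 1)).prod volume

instance : SFinite kap := by unfold kap; infer_instance

lemma one_add_int {m : ℝ} (hm : m < -1) : Integrable (fun x : ℝ => (1 + |x|) ^ m) := by
  have := integrable_one_add_norm (E := ℝ) (μ := volume) (r := -m) (by simp; linarith)
  simpa using this

lemma kap_int {f : ℝ → ℝ} (hf : Integrable f) : Integrable (fun t : ℝ × ℝ => f t.2) kap := by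
  have h1 : Integrable (fun _ : ℝ => (1 : ℝ)) (volume.restrict (Set.Icc 0 1)) :=
    integrable_const _
  have := h1.mul_prod hf
  simpa [kap] using this

lemma kap_integral (f : ℝ → ℂ) : ∫ t, f t.2 ∂kap = ∫ x, f x := by
  have := integral_prod_mul (μ := (volume : Measure ℝ).restrict (Set.Icc 0 1))
    (ν := (volume : Measure ℝ)) (fun _ => (1 : ℂ)) f
  simpa [kap] using this

lemma kap_integral_real (f : ℝ → ℝ) : ∫ t, f t.2 ∂kap = ∫ x, f x := by
  have := integral_prod_mul (μ := (volume : Measure ℝ).restrict (Set.Icc 0 1))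
    (ν := (volume : Measure ℝ)) (fun _ => (1 : ℝ)) f
  simpa [kap] using this

/-- amplitudes -/
structure IsAmp (d : ℕ) (m : ℝ) (p : ℝ × ℝ → Par d → ℂ) : Prop where
  cont : Continuous (fun z : (ℝ × ℝ) × Par d => p z.1 z.2)
  smooth : ∀ x, ContDiff ℝ ∞ (p x)
  bound : ∀ k : ℕ, ∃ C : ℝ, 0 ≤ C ∧ ∀ x w,
    ‖iteratedFDeriv ℝ k (p x) w‖ ≤ C * (1 + |x.2|) ^ m

lemma IsAmp.bound_le {d : ℕ} {m : ℝ} {p : ℝ × ℝ → Par d → ℂ} (hp : IsAmp d m p) (n : ℕ) :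
    ∃ C : ℝ, 0 ≤ C ∧ ∀ k ≤ n, ∀ x w,
    ‖iteratedFDeriv ℝ k (p x) w‖ ≤ C * (1 + |x.2|) ^ m := by
  choose C hC h using hp.bound
  refine ⟨∑ j ∈ Finset.range (n + 1), C j, Finset.sum_nonneg fun j _ => hC j, ?_⟩
  intro k hk x w
  refine (h k x w).trans ?_
  gcongr
  exact Finset.single_le_sum (fun j _ => hC j) (Finset.mem_range.2 (by omega))

lemma IsAmp.bound_zero {d : ℕ} {m : ℝ} {p : ℝ × ℝ → Par d → ℂ} (hp : IsAmp d m p) :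
    ∃ C : ℝ, 0 ≤ C ∧ ∀ x w, ‖p x w‖ ≤ C * (1 + |x.2|) ^ m := by
  obtain ⟨C, hC, h⟩ := hp.bound 0
  exact ⟨C, hC, fun x w => by simpa using h x w⟩

/-- The oscillatory integral of an amplitude. -/
def Osc (d : ℕ) (p : ℝ × ℝ → Par d → ℂ) (x : ℝ) (w : Par d) : ℂ :=
  ∫ t, Complex.exp (Complex.I * ((x * t.2 : ℝ) : ℂ)) * p t w ∂kap

lemma norm_exp_I (x : ℝ) : ‖Complex.exp (Complex.I * (x : ℂ))‖ = 1 := by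
  rw [mul_comm]
  exact Complex.norm_exp_ofReal_mul_I x

lemma Osc_cont {d : ℕ} {m : ℝ} (hm : m < -1) {p : ℝ × ℝ → Par d → ℂ} (hp : IsAmp d m p) :
    Continuous (fun z : ℝ × Par d => Osc d p z.1 z.2) := by
  obtain ⟨C, hC, h⟩ := hp.bound_zero
  unfold Osc
  have hc := hp.cont
  refine continuous_of_dominated (bound := fun t => C * (1 + |t.2|) ^ m) ?_ ?_ ?_ ?_
  · intro z
    apply Continuous.aestronglyMeasurable
    have : Continuous fun t : ℝ × ℝ => p t z.2 := hc.comp (by fun_prop : Continuous fun t : ℝ × ℝ => (t, z.2))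
    fun_prop
  · intro z
    refine Filter.Eventually.of_forall fun t => ?_
    rw [norm_mul, norm_exp_I, one_mul]
    exact h t z.2
  · exact (kap_int (one_add_int hm)).const_mul C
  · refine Filter.Eventually.of_forall fun t => ?_
    have : Continuous fun z : ℝ × Par d => p t z.2 :=
      hc.comp (by fun_prop : Continuous fun z : ℝ × Par d => (t, z.2))
    fun_prop

lemma bound_mul {d : ℕ} {f g : Sp d → ℂ} {A B : ℝ} {n : ℕ} (hf : ContDiff ℝ ∞ f)
    (hg : ContDiff ℝ ∞ g) (hA : 0 ≤ A)
    (hfb : ∀ k ≤ n, ∀ y, ‖iteratedFDeriv ℝ k f y‖ ≤ A)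
    (hgb : ∀ k ≤ n, ∀ y, ‖iteratedFDeriv ℝ k g y‖ ≤ B) :
    ∀ k ≤ n, ∀ y, ‖iteratedFDeriv ℝ k (fun y => f y * g y) y‖ ≤ 2 ^ n * (A * B) := by
  intro k hk y
  have hB : 0 ≤ B := (norm_nonneg _).trans (hgb 0 (by omega) y)
  refine (norm_iteratedFDeriv_mul_le hf hg y (n := k) (mod_cast le_top)).trans ?_
  calc _ ≤ ∑ i ∈ Finset.range (k + 1), (k.choose i : ℝ) * (A * B) := by
        refine Finset.sum_le_sum fun i hi => ?_
        rw [mul_assoc]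
        have hi' := Finset.mem_range.1 hi
        have h1 := hfb i (by omega) y
        have h2 := hgb (k - i) (by omega) y
        gcongr
    _ = 2 ^ k * (A * B) := by
        rw [← Finset.sum_mul]
        congr 1
        exact_mod_cast Nat.sum_range_choose k
    _ ≤ _ := by
        gcongr
        norm_num

lemma bound_comp {E F : Type*} [NormedAddCommGroup E] [NormedSpace ℝ E] [NormedAddCommGroup F]
    [NormedSpace ℝ F] {f : F → ℂ} (hf : ContDiff ℝ ∞ f) (L : E →L[ℝ] F) (hL : ‖L‖ ≤ 1) (k : ℕ)
    (y : E) : ‖iteratedFDeriv ℝ k (fun y => f (L y)) y‖ ≤ ‖iteratedFDeriv ℝ k f (L y)‖ := by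
  have := L.iteratedFDeriv_comp_right hf y (i := k) (mod_cast le_top)
  have e : (fun y => f (L y)) = f ∘ L := rfl
  rw [e, this]
  refine (ContinuousMultilinearMap.norm_compContinuousLinearMap_le _ _).trans ?_
  refine mul_le_of_le_one_right (norm_nonneg _) ?_
  exact Finset.prod_le_one (fun _ _ => norm_nonneg _) (fun _ _ => hL)

/-- y ↦ (y₂,y₃,y'') -/
def pr1 (d : ℕ) : Sp d →L[ℝ] Par d := ContinuousLinearMap.snd ℝ _ _

/-- y ↦ (y₁,y₃,y'') -/
def pr2 (d : ℕ) : Sp d →L[ℝ] Par d :=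
  (ContinuousLinearMap.fst ℝ ℝ _).prod
    ((ContinuousLinearMap.snd ℝ ℝ _).comp (ContinuousLinearMap.snd ℝ ℝ _))

lemma pr1_apply (d : ℕ) (y : Sp d) : pr1 d y = y.2 := rfl
lemma pr2_apply (d : ℕ) (y : Sp d) : pr2 d y = (y.1, y.2.2) := rfl

lemma pr1_norm (d : ℕ) : ‖pr1 d‖ ≤ 1 := ContinuousLinearMap.norm_snd_le _ _ _
lemma pr2_norm (d : ℕ) : ‖pr2 d‖ ≤ 1 := by
  refine ContinuousLinearMap.opNorm_le_bound _ zero_le_one fun y => ?_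
  rw [pr2_apply, one_mul]
  exact max_le (norm_fst_le y) ((norm_snd_le y.2).trans (norm_snd_le y))

lemma g_bound {d : ℕ} {m₁ m₂ : ℝ} {p q : ℝ × ℝ → Par d → ℂ}
    (hp : IsAmp d m₁ p) (hq : IsAmp d m₂ q)
    {φ : Sp d → ℂ} (hφ : ContDiff ℝ ∞ φ) (hφc : HasCompactSupport φ) (n : ℕ) :
    ∃ C : ℝ, 0 ≤ C ∧ ∀ t τ : ℝ × ℝ, ∀ k ≤ n, ∀ y,
      ‖iteratedFDeriv ℝ k (fun y : Sp d => φ y * (p t (pr1 d y) * q τ (pr2 d y))) y‖ ≤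
        C * ((1 + |t.2|) ^ m₁ * (1 + |τ.2|) ^ m₂) := by
  obtain ⟨A, hA0, hA⟩ : ∃ A : ℝ, 0 ≤ A ∧ ∀ k ≤ n, ∀ y, ‖iteratedFDeriv ℝ k φ y‖ ≤ A := by
    have : ∀ k : ℕ, ∃ C : ℝ, ∀ y, ‖iteratedFDeriv ℝ k φ y‖ ≤ C := fun k =>
      (hφ.continuous_iteratedFDeriv (mod_cast le_top)).bounded_above_of_compact_support
        (hφc.iteratedFDeriv k)
    choose C hC using this
    have hC0 : ∀ j, 0 ≤ C j := fun j => (norm_nonneg _).trans (hC j 0)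
    refine ⟨∑ j ∈ Finset.range (n + 1), C j, Finset.sum_nonneg fun j _ => hC0 j, ?_⟩
    intro k hk y
    exact (hC k y).trans
      (Finset.single_le_sum (fun j _ => hC0 j) (Finset.mem_range.2 (by omega)))
  obtain ⟨B, hB0, hB⟩ := hp.bound_le n
  obtain ⟨D, hD0, hD⟩ := hq.bound_le n
  refine ⟨2 ^ n * (A * (2 ^ n * (B * D))), by positivity, ?_⟩
  intro t τ
  have s1 : ContDiff ℝ ∞ (fun y => p t (pr1 d y)) := (hp.smooth t).comp (pr1 d).contDiff
  have s2 : ContDiff ℝ ∞ (fun y => q τ (pr2 d y)) := (hq.smooth τ).comp (pr2 d).contDiff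
  have b1 : ∀ k ≤ n, ∀ y, ‖iteratedFDeriv ℝ k (fun y => p t (pr1 d y)) y‖ ≤
      B * (1 + |t.2|) ^ m₁ := fun k hk y =>
    (bound_comp (hp.smooth t) _ (pr1_norm d) k y).trans (hB k hk t _)
  have b2 : ∀ k ≤ n, ∀ y, ‖iteratedFDeriv ℝ k (fun y => q τ (pr2 d y)) y‖ ≤
      D * (1 + |τ.2|) ^ m₂ := fun k hk y =>
    (bound_comp (hq.smooth τ) _ (pr2_norm d) k y).trans (hD k hk τ _)
  have b3 := bound_mul s1 s2 (by positivity) b1 b2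
  have b4 := bound_mul hφ (s1.mul s2) hA0 hA b3
  intro k hk y
  refine (b4 k hk y).trans (le_of_eq ?_)
  ring

lemma peetre {m : ℝ} (hm : m < -1) (N : ℕ) (hN : -m + 2 ≤ N) (ζ θ : ℝ) :
    (1 + |θ|) ^ m * ((1 + |ζ - θ|) ^ N)⁻¹ ≤ (1 + |ζ|) ^ m * (1 + |ζ - θ|) ^ (-2 : ℝ) := by
  have h0 : (0:ℝ) < 1 + |θ| := by positivity
  have h1 : (0:ℝ) < 1 + |ζ| := by positivity
  have h2 : (1:ℝ) ≤ 1 + |ζ - θ| := by linarith [abs_nonneg (ζ - θ)]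
  have h2' : (0:ℝ) < 1 + |ζ - θ| := by positivity
  have hle : 1 + |ζ| ≤ (1 + |θ|) * (1 + |ζ - θ|) := by
    have : |ζ| ≤ |θ| + |ζ - θ| := by
      have := abs_add_le θ (ζ - θ)
      simpa using this
    nlinarith [abs_nonneg θ, abs_nonneg (ζ - θ)]
  have h3 : ((1 + |θ|) * (1 + |ζ - θ|)) ^ m ≤ (1 + |ζ|) ^ m :=
    Real.rpow_le_rpow_of_nonpos h1 hle (by linarith)
  rw [Real.mul_rpow h0.le h2'.le] at h3
  have h4 : ((1 + |ζ - θ|) ^ N)⁻¹ ≤ (1 + |ζ - θ|) ^ m * (1 + |ζ - θ|) ^ (-2 : ℝ) := by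
    rw [← Real.rpow_natCast, ← Real.rpow_neg h2'.le, ← Real.rpow_add h2']
    exact Real.rpow_le_rpow_of_exponent_le h2 (by linarith)
  calc _ ≤ (1 + |θ|) ^ m * ((1 + |ζ - θ|) ^ m * (1 + |ζ - θ|) ^ (-2 : ℝ)) := by gcongr
    _ = ((1 + |θ|) ^ m * (1 + |ζ - θ|) ^ m) * (1 + |ζ - θ|) ^ (-2 : ℝ) := by ring
    _ ≤ _ := by gcongr


/-- The product function whose Fourier transform we estimate. -/
def Fun (d : ℕ) (φ : Sp d → ℂ) (p q : ℝ × ℝ → Par d → ℂ) (y : Sp d) : ℂ :=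
  φ y * (Osc d p y.1 (pr1 d y) * Osc d q y.2.1 (pr2 d y))

lemma pairing_cont (d : ℕ) : Continuous (fun z : Sp d × Sp d => pairing d z.1 z.2) := by
  unfold pairing
  fun_prop

lemma FT_measurable {d : ℕ} {F : Sp d → ℂ} (hF : Continuous F) : Measurable (FT d F) := by
  have hc : Continuous (fun z : Sp d × Sp d =>
      Complex.exp (-(Complex.I * (pairing d z.2 z.1 : ℂ))) * F z.2) := by
    have h := (pairing_cont d).comp (continuous_swap (X := Sp d) (Y := Sp d))
    have h' : Continuous (fun z : Sp d × Sp d => pairing d z.2 z.1) := h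
    fun_prop
  exact (hc.stronglyMeasurable.integral_prod_right (ν := (volume : Measure (Sp d)))).measurable

lemma Fun_cont {d : ℕ} {m₁ m₂ : ℝ} (hm₁ : m₁ < -1) (hm₂ : m₂ < -1) {p q : ℝ × ℝ → Par d → ℂ}
    (hp : IsAmp d m₁ p) (hq : IsAmp d m₂ q)
    {φ : Sp d → ℂ} (hφ : Continuous φ) : Continuous (Fun d φ p q) := by
  unfold Fun
  have h1 : Continuous fun y : Sp d => Osc d p y.1 (pr1 d y) :=
    (Osc_cont hm₁ hp).comp (by fun_prop : Continuous fun y : Sp d => (y.1, pr1 d y))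
  have h2 : Continuous fun y : Sp d => Osc d q y.2.1 (pr2 d y) :=
    (Osc_cont hm₂ hq).comp (by fun_prop : Continuous fun y : Sp d => (y.2.1, pr2 d y))
  fun_prop

lemma FT_Fun {d : ℕ} {m₁ m₂ : ℝ} (hm₁ : m₁ < -1) (hm₂ : m₂ < -1) {p q : ℝ × ℝ → Par d → ℂ}
    (hp : IsAmp d m₁ p) (hq : IsAmp d m₂ q)
    {φ : Sp d → ℂ} (hφ : Continuous φ) (hφc : HasCompactSupport φ) (ζ : Sp d) :
    FT d (Fun d φ p q) ζ = ∫ z : (ℝ × ℝ) × (ℝ × ℝ),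
      FT d (fun y : Sp d => φ y * (p z.1 (pr1 d y) * q z.2 (pr2 d y)))
        (ζ.1 - z.1.2, ζ.2.1 - z.2.2, ζ.2.2.1, ζ.2.2.2) ∂(kap.prod kap) := by
  obtain ⟨A, hA0, hA⟩ := hp.bound_zero
  obtain ⟨B, hB0, hB⟩ := hq.bound_zero
  let f : Sp d → (ℝ × ℝ) × (ℝ × ℝ) → ℂ := fun y z =>
    (Complex.exp (-(Complex.I * (pairing d y ζ : ℂ))) * φ y) *
      ((Complex.exp (Complex.I * ((y.1 * z.1.2 : ℝ) : ℂ)) * p z.1 (pr1 d y)) *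
      (Complex.exp (Complex.I * ((y.2.1 * z.2.2 : ℝ) : ℂ)) * q z.2 (pr2 d y)))
  have h1 : FT d (Fun d φ p q) ζ = ∫ y, ∫ z, f y z ∂(kap.prod kap) := by
    unfold FT Fun
    refine integral_congr_ae (Filter.Eventually.of_forall fun y => ?_)
    simp only [f]
    rw [integral_const_mul]
    rw [integral_prod_mul (μ := kap) (ν := kap)
      (fun t => Complex.exp (Complex.I * ((y.1 * t.2 : ℝ) : ℂ)) * p t (pr1 d y))
      (fun t => Complex.exp (Complex.I * ((y.2.1 * t.2 : ℝ) : ℂ)) * q t (pr2 d y))]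
    unfold Osc
    ring
  have hint : Integrable (Function.uncurry f) (volume.prod (kap.prod kap)) := by
    have hb : Integrable (fun x : Sp d × ((ℝ × ℝ) × (ℝ × ℝ)) =>
        ‖φ x.1‖ * ((A * (1 + |x.2.1.2|) ^ m₁) * (B * (1 + |x.2.2.2|) ^ m₂)))
        (volume.prod (kap.prod kap)) := by
      have i1 : Integrable (fun y => ‖φ y‖) volume :=
        (hφ.integrable_of_hasCompactSupport hφc).norm
      have i2 := ((kap_int (one_add_int hm₁)).const_mul A).mul_prod
        ((kap_int (one_add_int hm₂)).const_mul B)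
      exact i1.mul_prod i2
    refine hb.mono' ?_ ?_
    · apply Continuous.aestronglyMeasurable
      have c1 : Continuous fun x : Sp d × ((ℝ × ℝ) × (ℝ × ℝ)) => p x.2.1 (pr1 d x.1) :=
        hp.cont.comp (by fun_prop :
          Continuous fun x : Sp d × ((ℝ × ℝ) × (ℝ × ℝ)) => (x.2.1, pr1 d x.1))
      have c2 : Continuous fun x : Sp d × ((ℝ × ℝ) × (ℝ × ℝ)) => q x.2.2 (pr2 d x.1) :=
        hq.cont.comp (by fun_prop :
          Continuous fun x : Sp d × ((ℝ × ℝ) × (ℝ × ℝ)) => (x.2.2, pr2 d x.1))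
      have c3 : Continuous fun x : Sp d × ((ℝ × ℝ) × (ℝ × ℝ)) => pairing d x.1 ζ :=
        (pairing_cont d).comp (by fun_prop :
          Continuous fun x : Sp d × ((ℝ × ℝ) × (ℝ × ℝ)) => (x.1, ζ))
      simp only [f, Function.uncurry_def]
      refine Continuous.mul (Continuous.mul ?_ (hφ.comp continuous_fst))
        (Continuous.mul (Continuous.mul ?_ c1) (Continuous.mul ?_ c2))
      · exact Complex.continuous_exp.comp
          (continuous_const.mul (Complex.continuous_ofReal.comp c3)).neg
      · fun_prop
      · fun_prop
    · refine Filter.Eventually.of_forall fun x => ?_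
      have e1 : ‖Complex.exp (-(Complex.I * (pairing d x.1 ζ : ℂ)))‖ = 1 := by
        have := norm_exp_I (-(pairing d x.1 ζ))
        simpa using this
      simp only [f, Function.uncurry_def, norm_mul, norm_exp_I, e1, one_mul]
      have := hA x.2.1 (pr1 d x.1)
      have := hB x.2.2 (pr2 d x.1)
      gcongr
  rw [h1, integral_integral_swap hint]
  refine integral_congr_ae (Filter.Eventually.of_forall fun z => ?_)
  unfold FT
  refine integral_congr_ae (Filter.Eventually.of_forall fun y => ?_)
  simp only [f]
  have e : Complex.exp (-(Complex.I * (pairing d y (ζ.1 - z.1.2, ζ.2.1 - z.2.2, ζ.2.2.1, ζ.2.2.2) : ℂ)))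
      = Complex.exp (-(Complex.I * (pairing d y ζ : ℂ))) *
        (Complex.exp (Complex.I * ((y.1 * z.1.2 : ℝ) : ℂ)) *
        Complex.exp (Complex.I * ((y.2.1 * z.2.2 : ℝ) : ℂ))) := by
    rw [← Complex.exp_add, ← Complex.exp_add]
    congr 1
    simp only [pairing]
    push_cast
    ring
  rw [e]
  ring

lemma key_bound {d : ℕ} {m₁ m₂ : ℝ} (hm₁ : m₁ < -1) (hm₂ : m₂ < -1) {p q : ℝ × ℝ → Par d → ℂ}
    (hp : IsAmp d m₁ p) (hq : IsAmp d m₂ q)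
    {φ : Sp d → ℂ} (hφ : ContDiff ℝ ∞ φ) (hφc : HasCompactSupport φ) (N : ℕ) :
    ∃ C : ℝ, 0 ≤ C ∧ ∀ ζ : Sp d, ‖FT d (Fun d φ p q) ζ‖ ≤
      C * ((1 + |ζ.1|) ^ m₁ * (1 + |ζ.2.1|) ^ m₂ *
        ((1 + |ζ.2.2.1|) ^ N * (1 + ‖ζ.2.2.2‖) ^ N)⁻¹) := by
  obtain ⟨N', hN'⟩ := exists_nat_ge (max (N : ℝ) (max (-m₁ + 2) (-m₂ + 2)))
  have hNN : N ≤ N' := by exact_mod_cast (le_max_left _ _).trans hN'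
  have hN1 : -m₁ + 2 ≤ N' := ((le_max_left _ _).trans (le_max_right _ _)).trans hN'
  have hN2 : -m₂ + 2 ≤ N' := ((le_max_right _ _).trans (le_max_right _ _)).trans hN'
  obtain ⟨C, hC0, hC⟩ := FT_decay d (tsupport φ) hφc N'
  obtain ⟨A, hA0, hA⟩ := g_bound hp hq hφ hφc (4 * N')
  set J : ℝ := ∫ x : ℝ, (1 + |x|) ^ (-2 : ℝ) with hJ
  have hJ0 : 0 ≤ J := integral_nonneg fun x => by positivity
  refine ⟨C * A * (J * J), by positivity, ?_⟩
  intro ζ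
  set R : ℝ := (1 + |ζ.1|) ^ m₁ * (1 + |ζ.2.1|) ^ m₂ *
        ((1 + |ζ.2.2.1|) ^ N * (1 + ‖ζ.2.2.2‖) ^ N)⁻¹ with hR
  have hR0 : 0 ≤ R := by positivity
  rw [FT_Fun hm₁ hm₂ hp hq hφ.continuous hφc ζ]
  have hi2 : ∀ c : ℝ, Integrable (fun x : ℝ => (1 + |c - x|) ^ (-2 : ℝ)) := fun c =>
    (one_add_int (m := -2) (by norm_num)).comp_sub_left c
  have hJc : ∀ c : ℝ, ∫ t, (1 + |c - t.2|) ^ (-2 : ℝ) ∂kap = J := by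
    intro c
    rw [kap_integral_real (fun x => (1 + |c - x|) ^ (-2 : ℝ))]
    exact integral_sub_left_eq_self (fun x : ℝ => (1 + |x|) ^ (-2 : ℝ)) volume c
  have hdom : Integrable (fun z : (ℝ × ℝ) × (ℝ × ℝ) => C * A * R *
      ((1 + |ζ.1 - z.1.2|) ^ (-2 : ℝ) * (1 + |ζ.2.1 - z.2.2|) ^ (-2 : ℝ))) (kap.prod kap) :=
    ((kap_int (hi2 ζ.1)).mul_prod (kap_int (hi2 ζ.2.1))).const_mul _
  refine (norm_integral_le_of_norm_le hdom (Filter.Eventually.of_forall fun z => ?_)).trans ?_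
  · have hs : tsupport (fun y : Sp d => φ y * (p z.1 (pr1 d y) * q z.2 (pr2 d y))) ⊆ tsupport φ :=
      tsupport_mul_subset_left
    have hg : ContDiff ℝ ∞ (fun y : Sp d => φ y * (p z.1 (pr1 d y) * q z.2 (pr2 d y))) :=
      hφ.mul (((hp.smooth z.1).comp (pr1 d).contDiff).mul ((hq.smooth z.2).comp (pr2 d).contDiff))
    have h := hC _ _ hg hs (by positivity) (hA z.1 z.2)
      (ζ.1 - z.1.2, ζ.2.1 - z.2.2, ζ.2.2.1, ζ.2.2.2)
    simp only at h
    have p1 := peetre hm₁ N' hN1 ζ.1 z.1.2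
    have p2 := peetre hm₂ N' hN2 ζ.2.1 z.2.2
    set X := ‖FT d (fun y : Sp d => φ y * (p z.1 (pr1 d y) * q z.2 (pr2 d y)))
        (ζ.1 - z.1.2, ζ.2.1 - z.2.2, ζ.2.2.1, ζ.2.2.2)‖
    have q1 : (0:ℝ) < (1 + |ζ.1 - z.1.2|) ^ N' := by positivity
    have q2 : (0:ℝ) < (1 + |ζ.2.1 - z.2.2|) ^ N' := by positivity
    have q3 : (0:ℝ) < (1 + |ζ.2.2.1|) ^ N' := by positivity
    have q4 : (0:ℝ) < (1 + ‖ζ.2.2.2‖) ^ N' := by positivity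
    have r3 : ((1 + |ζ.2.2.1|) ^ N')⁻¹ ≤ ((1 + |ζ.2.2.1|) ^ N)⁻¹ := by
      gcongr
      linarith [abs_nonneg ζ.2.2.1]
    have r4 : ((1 + ‖ζ.2.2.2‖) ^ N')⁻¹ ≤ ((1 + ‖ζ.2.2.2‖) ^ N)⁻¹ := by
      gcongr
      linarith [norm_nonneg ζ.2.2.2]
    have hX : X ≤ C * A * (((1 + |z.1.2|) ^ m₁ * ((1 + |ζ.1 - z.1.2|) ^ N')⁻¹) *
        ((1 + |z.2.2|) ^ m₂ * ((1 + |ζ.2.1 - z.2.2|) ^ N')⁻¹) *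
        (((1 + |ζ.2.2.1|) ^ N')⁻¹ * ((1 + ‖ζ.2.2.2‖) ^ N')⁻¹)) := by
      rw [mul_comm] at h
      rw [← le_div_iff₀ (by positivity)] at h
      refine h.trans (le_of_eq ?_)
      field_simp
    calc X ≤ _ := hX
      _ ≤ C * A * (((1 + |ζ.1|) ^ m₁ * (1 + |ζ.1 - z.1.2|) ^ (-2 : ℝ)) *
        ((1 + |ζ.2.1|) ^ m₂ * (1 + |ζ.2.1 - z.2.2|) ^ (-2 : ℝ)) *
        (((1 + |ζ.2.2.1|) ^ N)⁻¹ * ((1 + ‖ζ.2.2.2‖) ^ N)⁻¹)) := by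
          gcongr
      _ = _ := by
          rw [hR, mul_inv]
          ring
  · rw [integral_const_mul]
    rw [integral_prod_mul (μ := kap) (ν := kap)
      (fun t => (1 + |ζ.1 - t.2|) ^ (-2 : ℝ)) (fun t => (1 + |ζ.2.1 - t.2|) ^ (-2 : ℝ)), hJc, hJc]
    exact le_of_eq (by ring)


/-- clamp to the unit interval -/
def clamp (s : ℝ) : ℝ := max 0 (min s 1)

lemma clamp_cont : Continuous clamp := by unfold clamp; fun_prop
lemma clamp_abs (s : ℝ) : |clamp s| ≤ 1 := by
  rw [abs_of_nonneg (le_max_left _ _)]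
  exact max_le zero_le_one (min_le_right _ _)
lemma clamp_eq {s : ℝ} (h0 : 0 ≤ s) (h1 : s ≤ 1) : clamp s = s := by
  simp [clamp, min_eq_left h1, max_eq_right h0]

/-- scaling of the first parameter -/
def Tsc (d : ℕ) (c : ℝ) : Par d →L[ℝ] Par d :=
  (c • ContinuousLinearMap.fst ℝ ℝ (ℝ × EuclideanSpace ℝ (Fin d))).prod
    (ContinuousLinearMap.snd ℝ ℝ (ℝ × EuclideanSpace ℝ (Fin d)))

lemma Tsc_apply (d : ℕ) (c : ℝ) (w : Par d) : Tsc d c w = (c * w.1, w.2) := by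
  simp [Tsc]

lemma Tsc_norm (d : ℕ) {c : ℝ} (hc : |c| ≤ 1) : ‖Tsc d c‖ ≤ 1 := by
  refine ContinuousLinearMap.opNorm_le_bound _ zero_le_one fun w => ?_
  rw [Tsc_apply, one_mul]
  refine max_le ?_ (norm_snd_le w)
  refine le_trans ?_ (norm_fst_le w)
  rw [norm_mul]
  exact mul_le_of_le_one_left (norm_nonneg _) hc

/-- derivative in the first parameter direction -/
def ampA (d : ℕ) (a : ℝ × Par d → ℂ) (x : ℝ × ℝ) (w : Par d) : ℂ :=
  fderiv ℝ (fun w' => a (x.2, w')) (Tsc d (clamp x.1) w) (1, 0)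

/-- derivative in the phase variable -/
def ampB (d : ℕ) (c : ℝ) (a : ℝ × Par d → ℂ) (x : ℝ × ℝ) (w : Par d) : ℂ :=
  Complex.I • deriv (fun θ => a (θ, Tsc d c w)) x.2

lemma fderiv_par {d : ℕ} {a : ℝ × Par d → ℂ} (ha : ContDiff ℝ ∞ a) (θ : ℝ) (w v : Par d) :
    fderiv ℝ (fun w' => a (θ, w')) w v = fderiv ℝ a (θ, w) (0, v) := by
  have h1 : HasFDerivAt a (fderiv ℝ a (θ, w)) (θ, w) :=
    (ha.differentiable (by simp) _).hasFDerivAt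
  have h2 := h1.comp w (hasFDerivAt_prodMk_right θ w)
  have h3 := h2.fderiv
  have : (a ∘ fun w' => (θ, w')) = fun w' => a (θ, w') := rfl
  rw [this] at h3
  rw [h3]
  simp

lemma hasDerivAt_phase {d : ℕ} {a : ℝ × Par d → ℂ} (ha : ContDiff ℝ ∞ a) (θ : ℝ) (w : Par d) :
    HasDerivAt (fun θ => a (θ, w)) (fderiv ℝ a (θ, w) (1, 0)) θ := by
  have h1 : HasFDerivAt a (fderiv ℝ a (θ, w)) (θ, w) :=
    (ha.differentiable (by simp) _).hasFDerivAt
  have h2 := (h1.comp θ (hasFDerivAt_prodMk_left θ w)).hasDerivAt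
  simpa [Function.comp_def] using h2

lemma fderiv_cont {d : ℕ} {a : ℝ × Par d → ℂ} (ha : ContDiff ℝ ∞ a) : Continuous (fderiv ℝ a) := ha.continuous_fderiv (by simp)

lemma smooth_par {d : ℕ} {a : ℝ × Par d → ℂ} (ha : ContDiff ℝ ∞ a) (θ : ℝ) : ContDiff ℝ ∞ (fun w => a (θ, w)) :=
  ha.comp (contDiff_prodMk_right θ)

lemma sym_bound {d : ℕ} {m : ℝ} {a : ℝ × Par d → ℂ} (ha : IsSymbolP d m a) (k β : ℕ) :
    ∃ C : ℝ, 0 ≤ C ∧ ∀ (η : ℝ) (w : Par d),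
    ‖iteratedFDeriv ℝ k (fun w' => iteratedDeriv β (fun η' => a (η', w')) η) w‖ ≤
      C * (1 + |η|) ^ (m - β) := by
  obtain ⟨C, hC⟩ := ha.2 k β
  refine ⟨|C|, abs_nonneg _, fun η w => (hC η w).trans ?_⟩
  gcongr
  exact le_abs_self C

lemma ampA_isAmp {d : ℕ} {m : ℝ} {a : ℝ × Par d → ℂ} (ha : IsSymbolP d m a) :
    IsAmp d m (ampA d a) where
  cont := by
    have hs : ContDiff ℝ ∞ a := ha.1
    have h := fderiv_cont hs
    have hcl := clamp_cont
    simp only [ampA, fderiv_par hs, Tsc_apply]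
    have : Continuous fun z : (ℝ × ℝ) × Par d =>
        fderiv ℝ a (z.1.2, (clamp z.1.1 * z.2.1, z.2.2)) :=
      h.comp (by fun_prop)
    exact this.clm_apply continuous_const
  smooth := by
    intro x
    have hs : ContDiff ℝ ∞ a := ha.1
    have h1 : ContDiff ℝ ∞ (fderiv ℝ (fun w' => a (x.2, w'))) :=
      (smooth_par hs x.2).fderiv_right (by simp)
    exact (h1.comp (Tsc d (clamp x.1)).contDiff).clm_apply contDiff_const
  bound := by
    intro k
    have hs : ContDiff ℝ ∞ a := ha.1
    obtain ⟨C, hC, h⟩ := sym_bound ha (k + 1) 0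
    refine ⟨C, hC, fun x w => ?_⟩
    have h1 : ContDiff ℝ ∞ (fderiv ℝ (fun w' => a (x.2, w'))) :=
      (smooth_par hs x.2).fderiv_right (by simp)
    have b1 := bound_comp (f := fun w => fderiv ℝ (fun w' => a (x.2, w')) w (1, 0))
      (h1.clm_apply contDiff_const) (Tsc d (clamp x.1)) (Tsc_norm d (clamp_abs x.1)) k w
    refine b1.trans ?_
    refine (norm_iteratedFDeriv_clm_apply_const (h1.contDiffAt) (mod_cast le_top)).trans ?_
    rw [norm_iteratedFDeriv_fderiv]
    have h2 := h x.2 (Tsc d (clamp x.1) w)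
    simp only [iteratedDeriv_zero, Nat.cast_zero, sub_zero] at h2
    simpa [Prod.norm_def] using h2

lemma ampB_isAmp {d : ℕ} {m : ℝ} {a : ℝ × Par d → ℂ} (ha : IsSymbolP d m a) {c : ℝ}
    (hc : |c| ≤ 1) : IsAmp d (m - 1) (ampB d c a) where
  cont := by
    have hs : ContDiff ℝ ∞ a := ha.1
    have h := fderiv_cont hs
    simp only [ampB, (hasDerivAt_phase hs _ _).deriv]
    have : Continuous fun z : (ℝ × ℝ) × Par d => fderiv ℝ a (z.1.2, Tsc d c z.2) :=
      h.comp (by fun_prop)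
    exact (this.clm_apply continuous_const).const_smul Complex.I
  smooth := by
    intro x
    have hs : ContDiff ℝ ∞ a := ha.1
    unfold ampB
    simp only [(hasDerivAt_phase hs _ _).deriv]
    have h1 : ContDiff ℝ ∞ (fderiv ℝ a) := hs.fderiv_right (by simp)
    have h2 : ContDiff ℝ ∞ (fun w => fderiv ℝ a (x.2, Tsc d c w)) :=
      h1.comp (contDiff_const.prodMk (Tsc d c).contDiff)
    exact (h2.clm_apply contDiff_const).const_smul Complex.I
  bound := by
    intro k
    have hs : ContDiff ℝ ∞ a := ha.1
    obtain ⟨C, hC, h⟩ := sym_bound ha k 1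
    refine ⟨C, hC, fun x w => ?_⟩
    have h1 : ContDiff ℝ ∞ (fderiv ℝ a) := hs.fderiv_right (by simp)
    have h2 : ContDiff ℝ ∞ (fun w => deriv (fun θ => a (θ, w)) x.2) := by
      simp only [(hasDerivAt_phase hs _ _).deriv]
      exact (h1.comp (contDiff_prodMk_right x.2)).clm_apply contDiff_const
    have h3 : ContDiff ℝ ∞ (fun w => deriv (fun θ => a (θ, Tsc d c w)) x.2) :=
      h2.comp (Tsc d c).contDiff
    have b1 := bound_comp h2 (Tsc d c) (Tsc_norm d hc) k w
    have h4 := h x.2 (Tsc d c w)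
    simp only [iteratedDeriv_one, Nat.cast_one] at h4
    have h5 : iteratedFDeriv ℝ k (ampB d c a x) w =
        Complex.I • iteratedFDeriv ℝ k (fun w => deriv (fun θ => a (θ, Tsc d c w)) x.2) w :=
      iteratedFDeriv_const_smul_apply' (h3.contDiffAt.of_le (mod_cast le_top))
    rw [h5, norm_smul, Complex.norm_I, one_mul]
    exact b1.trans h4

/-- the one-variable oscillatory integral -/
def Sw (d : ℕ) (a : ℝ × Par d → ℂ) (x : ℝ) (w : Par d) : ℂ :=
  ∫ θ : ℝ, Complex.exp (Complex.I * ((x * θ : ℝ) : ℂ)) * a (θ, w)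

lemma Sw_integrable {d : ℕ} {m : ℝ} (hm : m < -1) {a : ℝ × Par d → ℂ} (ha : IsSymbolP d m a)
    (x : ℝ) (w : Par d) :
    Integrable (fun θ : ℝ => Complex.exp (Complex.I * ((x * θ : ℝ) : ℂ)) * a (θ, w)) := by
  obtain ⟨C, hC, h⟩ := sym_bound ha 0 0
  refine ((one_add_int hm).const_mul C).mono' ?_ (Filter.Eventually.of_forall fun θ => ?_)
  · have := ha.1.continuous
    apply Continuous.aestronglyMeasurable
    fun_prop
  · rw [norm_mul, norm_exp_I, one_mul]
    simpa using h θ w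

lemma Osc_integrable {d : ℕ} {m : ℝ} (hm : m < -1) {p : ℝ × ℝ → Par d → ℂ} (hp : IsAmp d m p)
    (x : ℝ) (w : Par d) :
    Integrable (fun t => Complex.exp (Complex.I * ((x * t.2 : ℝ) : ℂ)) * p t w) kap := by
  obtain ⟨C, hC, h⟩ := hp.bound_zero
  refine ((kap_int (one_add_int hm)).const_mul C).mono' ?_ (Filter.Eventually.of_forall fun t => ?_)
  · apply Continuous.aestronglyMeasurable
    have : Continuous fun t : ℝ × ℝ => p t w :=
      hp.cont.comp (by fun_prop : Continuous fun t : ℝ × ℝ => (t, w))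
    fun_prop
  · rw [norm_mul, norm_exp_I, one_mul]
    exact h t w

lemma Sw_sub {d : ℕ} {m : ℝ} (hm : m < -1) {a : ℝ × Par d → ℂ} (ha : IsSymbolP d m a)
    (x : ℝ) (w : Par d) :
    Sw d a x w - Sw d a x (Tsc d 0 w) = (w.1 : ℂ) * Osc d (ampA d a) x w := by
  have hs : ContDiff ℝ ∞ a := ha.1
  have hA := ampA_isAmp ha
  unfold Sw Osc
  rw [← integral_sub (Sw_integrable hm ha x w) (Sw_integrable hm ha x _)]
  have hi := Osc_integrable hm hA x w
  unfold kap at hi ⊢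
  rw [integral_prod_symm _ hi, ← integral_const_mul]
  refine integral_congr_ae (Filter.Eventually.of_forall fun θ => ?_)
  simp only
  rw [integral_const_mul, ← mul_sub, mul_left_comm]
  congr 1
  rw [integral_Icc_eq_integral_Ioc, ← intervalIntegral.integral_of_le zero_le_one,
    ← intervalIntegral.integral_const_mul]
  have hd : ∀ s : ℝ, HasDerivAt (fun s => a (θ, Tsc d s w))
      ((w.1 : ℂ) * fderiv ℝ (fun w' => a (θ, w')) (Tsc d s w) (1, 0)) s := by
    intro s
    have h1 : HasFDerivAt (fun w' => a (θ, w')) (fderiv ℝ (fun w' => a (θ, w')) (Tsc d s w))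
        (Tsc d s w) := ((smooth_par hs θ).differentiable (by simp) _).hasFDerivAt
    have h2 : HasDerivAt (fun s : ℝ => Tsc d s w) (w.1 • ((1, 0) : Par d)) s := by
      simp only [Tsc_apply]
      have : HasDerivAt (fun s : ℝ => (s * w.1, w.2)) (1 * w.1, (0 : ℝ × EuclideanSpace ℝ (Fin d))) s :=
        ((hasDerivAt_id s).mul_const w.1).prodMk (hasDerivAt_const s w.2)
      simpa using this
    have h3 := h1.comp_hasDerivAt s h2
    rw [map_smul, Complex.real_smul] at h3
    exact h3
  have hcont : Continuous fun s : ℝ =>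
      ((w.1 : ℂ) * fderiv ℝ (fun w' => a (θ, w')) (Tsc d s w) (1, 0)) := by
    simp only [fderiv_par hs, Tsc_apply]
    have : Continuous fun s : ℝ => fderiv ℝ a (θ, (s * w.1, w.2)) :=
      (fderiv_cont hs).comp (by fun_prop)
    exact continuous_const.mul (this.clm_apply continuous_const)
  have hftc := intervalIntegral.integral_eq_sub_of_hasDerivAt (a := 0) (b := 1)
    (fun s _ => hd s) (hcont.intervalIntegrable 0 1)
  have e1 : Tsc d 1 w = w := by rw [Tsc_apply, one_mul]
  rw [e1] at hftc
  rw [← hftc]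
  refine intervalIntegral.integral_congr fun s hs' => ?_
  rw [Set.uIcc_of_le zero_le_one] at hs'
  simp only [ampA, clamp_eq hs'.1 hs'.2]

lemma Sw_mul {d : ℕ} {m : ℝ} (hm : m < -1) {a : ℝ × Par d → ℂ} (ha : IsSymbolP d m a)
    {c : ℝ} (x : ℝ) (w : Par d) :
    (x : ℂ) * Sw d a x (Tsc d c w) = Osc d (ampB d c a) x w := by
  have hs : ContDiff ℝ ∞ a := ha.1
  unfold Sw Osc
  have hk : ∫ t, Complex.exp (Complex.I * ((x * t.2 : ℝ) : ℂ)) * ampB d c a t w ∂kap =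
      ∫ θ : ℝ, Complex.exp (Complex.I * ((x * θ : ℝ) : ℂ)) * ampB d c a (0, θ) w :=
    kap_integral (fun θ => Complex.exp (Complex.I * ((x * θ : ℝ) : ℂ)) * ampB d c a (0, θ) w)
  rw [hk]
  set w' := Tsc d c w with hw'
  have hu : ∀ θ : ℝ, HasDerivAt (fun θ : ℝ => Complex.exp (Complex.I * ((x * θ : ℝ) : ℂ)))
      (Complex.exp (Complex.I * ((x * θ : ℝ) : ℂ)) * (Complex.I * x)) θ := by
    intro θ
    have h1 : HasDerivAt (fun θ : ℝ => Complex.I * ((x * θ : ℝ) : ℂ)) (Complex.I * x) θ := by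
      have := ((hasDerivAt_id θ).const_mul x).ofReal_comp.const_mul Complex.I
      simpa using this
    exact h1.cexp
  have hv : ∀ θ : ℝ, HasDerivAt (fun θ => a (θ, w')) (deriv (fun θ => a (θ, w')) θ) θ := fun θ =>
    (hasDerivAt_phase hs θ w').differentiableAt.hasDerivAt
  have i0 := Sw_integrable hm ha x w'
  have i1 : Integrable (fun θ : ℝ => Complex.exp (Complex.I * ((x * θ : ℝ) : ℂ)) *
      deriv (fun θ => a (θ, w')) θ) := by
    obtain ⟨C, hC, h⟩ := sym_bound ha 0 1
    refine ((one_add_int (m := m - 1) (by linarith)).const_mul C).mono' ?_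
      (Filter.Eventually.of_forall fun θ => ?_)
    · apply Continuous.aestronglyMeasurable
      simp only [(hasDerivAt_phase hs _ _).deriv]
      have : Continuous fun θ : ℝ => fderiv ℝ a (θ, w') (1, 0) :=
        ((fderiv_cont hs).comp (by fun_prop : Continuous fun θ : ℝ => (θ, w'))).clm_apply
          continuous_const
      fun_prop
    · rw [norm_mul, norm_exp_I, one_mul]
      simpa [iteratedDeriv_one] using h θ w'
  have i2 : Integrable (fun θ : ℝ => (Complex.exp (Complex.I * ((x * θ : ℝ) : ℂ)) * (Complex.I * x)) *
      a (θ, w')) := by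
    have := i0.const_mul (Complex.I * x)
    refine this.congr (Filter.Eventually.of_forall fun θ => ?_)
    simp only
    ring
  have ibp := integral_mul_deriv_eq_deriv_mul_of_integrable (fun θ _ => hu θ) (fun θ _ => hv θ)
    i1 i2 i0
  have e1 : ∫ θ : ℝ, Complex.exp (Complex.I * ((x * θ : ℝ) : ℂ)) * ampB d c a (0, θ) w =
      Complex.I * ∫ θ : ℝ, Complex.exp (Complex.I * ((x * θ : ℝ) : ℂ)) *
        deriv (fun θ => a (θ, w')) θ := by
    rw [← integral_const_mul]
    refine integral_congr_ae (Filter.Eventually.of_forall fun θ => ?_)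
    simp only [ampB, smul_eq_mul, ← hw']
    ring
  have e2 : ∫ θ : ℝ, (Complex.exp (Complex.I * ((x * θ : ℝ) : ℂ)) * (Complex.I * x)) *
      a (θ, w') = (Complex.I * x) * ∫ θ : ℝ, Complex.exp (Complex.I * ((x * θ : ℝ) : ℂ)) * a (θ, w') := by
    rw [← integral_const_mul]
    refine integral_congr_ae (Filter.Eventually.of_forall fun θ => ?_)
    simp only
    ring
  rw [e1, ibp, e2]
  linear_combination ((x : ℂ) * ∫ θ : ℝ, Complex.exp (Complex.I * ((x * θ : ℝ) : ℂ)) * a (θ, w')) *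
    Complex.I_mul_I


lemma w_factor {a b k : ℝ} (ha : 0 ≤ a) (hb : 0 ≤ b) (hk : 0 ≤ k) :
    (1 + a ^ 2 + b ^ 2) ^ (k / 2) ≤ (1 + a) ^ k * (1 + b) ^ k := by
  have h : 1 + a ^ 2 + b ^ 2 ≤ ((1 + a) * (1 + b)) ^ (2 : ℝ) := by
    rw [Real.rpow_two]
    have : 0 ≤ a * b := by positivity
    nlinarith
  calc _ ≤ (((1 + a) * (1 + b)) ^ (2 : ℝ)) ^ (k / 2) := by gcongr
    _ = ((1 + a) * (1 + b)) ^ k := by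
      rw [← Real.rpow_mul (by positivity)]
      congr 1
      ring
    _ = _ := Real.mul_rpow (by positivity) (by positivity)

lemma w_delta {a b c δ : ℝ} (ha : 0 ≤ a) (hb : 0 ≤ b) (hc : 0 ≤ c) (hδ : 0 < δ) :
    (1 + a ^ 2 + b ^ 2 + c) ^ (-δ / 2) ≤
      4 ^ (δ / 2) * ((1 + a) ^ (-δ / 2) * (1 + b) ^ (-δ / 2)) := by
  have h : (1 + a) * (1 + b) / 4 ≤ 1 + a ^ 2 + b ^ 2 + c := by
    nlinarith [sq_nonneg (a - b), sq_nonneg (a - 1), sq_nonneg (b - 1)]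
  calc _ ≤ ((1 + a) * (1 + b) / 4) ^ (-δ / 2) :=
        Real.rpow_le_rpow_of_nonpos (by positivity) h (by linarith)
    _ = _ := by
        rw [Real.div_rpow (by positivity) (by norm_num), Real.mul_rpow (by positivity) (by positivity),
          div_eq_mul_inv, ← Real.rpow_neg (by norm_num), mul_comm]
        congr 2
        ring

lemma L2_bound {d : ℕ} {m₁ m₂ k₁ k₂ k₃ δ : ℝ} (h₁ : k₁ = -m₁ - 1 / 2) (h₂ : k₂ = -m₂ - 1 / 2)
    (hk₁ : 0 ≤ k₁) (hk₂ : 0 ≤ k₂) (hk₃ : 0 ≤ k₃) (hδ : 0 < δ) {e : Sp d → ℂ} (he : Measurable e)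
    (hb : ∀ N : ℕ, ∃ C : ℝ, 0 ≤ C ∧ ∀ ζ : Sp d, ‖e ζ‖ ≤
      C * ((1 + |ζ.1|) ^ m₁ * (1 + |ζ.2.1|) ^ m₂ *
        ((1 + |ζ.2.2.1|) ^ N * (1 + ‖ζ.2.2.2‖) ^ N)⁻¹)) :
    MemLp (fun η => W d k₁ k₂ k₃ δ η • e η) 2 volume := by
  obtain ⟨N, hN⟩ := exists_nat_ge (k₁ + k₂ + k₃ + d + 1)
  obtain ⟨C, hC0, hC⟩ := hb N
  have hWm : Measurable (W d k₁ k₂ k₃ δ) := by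
    unfold W
    fun_prop
  have hmeas : AEStronglyMeasurable (fun η => W d k₁ k₂ k₃ δ η • e η) volume :=
    (hWm.smul he).aestronglyMeasurable
  rw [memLp_two_iff_integrable_sq_norm hmeas]
  have j1 : Integrable (fun x : ℝ => (1 + |x|) ^ (-1 - δ)) := one_add_int (by linarith)
  have j3 : Integrable (fun x : ℝ => (1 + |x|) ^ (-2 : ℝ)) := one_add_int (by norm_num)
  have j4 : Integrable (fun x : EuclideanSpace ℝ (Fin d) => (1 + ‖x‖) ^ (-(2 * (d + 1) : ℝ))) :=
    integrable_one_add_norm (by simp; linarith)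
  have jj : Integrable (fun η : Sp d => (C * 4 ^ (δ / 2)) ^ 2 * ((1 + |η.1|) ^ (-1 - δ) *
      ((1 + |η.2.1|) ^ (-1 - δ) * ((1 + |η.2.2.1|) ^ (-2 : ℝ) *
        (1 + ‖η.2.2.2‖) ^ (-(2 * (d + 1) : ℝ)))))) :=
    (j1.mul_prod (j1.mul_prod (j3.mul_prod j4))).const_mul _
  refine jj.mono' ?_ (Filter.Eventually.of_forall fun η => ?_)
  · exact (hmeas.norm.pow 2)
  have hC' := hC η
  have a1 : (0:ℝ) < 1 + |η.1| := by positivity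
  have a2 : (0:ℝ) < 1 + |η.2.1| := by positivity
  have a3 : (1:ℝ) ≤ 1 + |η.2.2.1| := by linarith [abs_nonneg η.2.2.1]
  have a4 : (1:ℝ) ≤ 1 + ‖η.2.2.2‖ := by linarith [norm_nonneg η.2.2.2]
  have a3' : (0:ℝ) < 1 + |η.2.2.1| := by linarith
  have a4' : (0:ℝ) < 1 + ‖η.2.2.2‖ := by linarith
  have f1 := w_factor (abs_nonneg η.1) (norm_nonneg η.2.2.2) hk₁
  have f2 := w_factor (abs_nonneg η.2.1) (norm_nonneg η.2.2.2) hk₂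
  have f3 := w_factor (abs_nonneg η.2.2.1) (norm_nonneg η.2.2.2) hk₃
  have f4 := w_delta (abs_nonneg η.1) (abs_nonneg η.2.1)
    (by positivity : 0 ≤ η.2.2.1 ^ 2 + ‖η.2.2.2‖ ^ 2) hδ
  simp only [sq_abs] at f1 f2 f3 f4
  rw [← add_assoc] at f4
  have hW0 : 0 ≤ W d k₁ k₂ k₃ δ η := by unfold W; positivity
  have hWle : W d k₁ k₂ k₃ δ η ≤ ((1 + |η.1|) ^ k₁ * (1 + ‖η.2.2.2‖) ^ k₁) *
      ((1 + |η.2.1|) ^ k₂ * (1 + ‖η.2.2.2‖) ^ k₂) *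
      ((1 + |η.2.2.1|) ^ k₃ * (1 + ‖η.2.2.2‖) ^ k₃) *
      (4 ^ (δ / 2) * ((1 + |η.1|) ^ (-δ / 2) * (1 + |η.2.1|) ^ (-δ / 2))) := by
    unfold W
    gcongr
  have g3 : (1 + |η.2.2.1|) ^ k₃ * ((1 + |η.2.2.1|) ^ N)⁻¹ ≤ (1 + |η.2.2.1|) ^ (-1 : ℝ) := by
    rw [← Real.rpow_natCast, ← Real.rpow_neg a3'.le, ← Real.rpow_add a3']
    refine Real.rpow_le_rpow_of_exponent_le a3 ?_
    have : (0:ℝ) ≤ d := Nat.cast_nonneg d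
    linarith
  have g4 : (1 + ‖η.2.2.2‖) ^ k₁ * (1 + ‖η.2.2.2‖) ^ k₂ * (1 + ‖η.2.2.2‖) ^ k₃ *
      ((1 + ‖η.2.2.2‖) ^ N)⁻¹ ≤ (1 + ‖η.2.2.2‖) ^ (-(d + 1) : ℝ) := by
    rw [← Real.rpow_natCast, ← Real.rpow_neg a4'.le, ← Real.rpow_add a4', ← Real.rpow_add a4',
      ← Real.rpow_add a4']
    refine Real.rpow_le_rpow_of_exponent_le a4 ?_
    linarith
  have g1 : (1 + |η.1|) ^ k₁ * (1 + |η.1|) ^ (-δ / 2) * (1 + |η.1|) ^ m₁ =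
      (1 + |η.1|) ^ ((-1 - δ) / 2) := by
    rw [← Real.rpow_add a1, ← Real.rpow_add a1, h₁]
    congr 1
    ring
  have g2 : (1 + |η.2.1|) ^ k₂ * (1 + |η.2.1|) ^ (-δ / 2) * (1 + |η.2.1|) ^ m₂ =
      (1 + |η.2.1|) ^ ((-1 - δ) / 2) := by
    rw [← Real.rpow_add a2, ← Real.rpow_add a2, h₂]
    congr 1
    ring
  have main : ‖W d k₁ k₂ k₃ δ η • e η‖ ≤ (C * 4 ^ (δ / 2)) * ((1 + |η.1|) ^ ((-1 - δ) / 2) *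
      ((1 + |η.2.1|) ^ ((-1 - δ) / 2) * ((1 + |η.2.2.1|) ^ (-1 : ℝ) *
        (1 + ‖η.2.2.2‖) ^ (-(d + 1) : ℝ)))) := by
    rw [norm_smul, Real.norm_of_nonneg hW0]
    calc _ ≤ _ := mul_le_mul hWle hC' (norm_nonneg _) (by positivity)
      _ = (C * 4 ^ (δ / 2)) * (((1 + |η.1|) ^ k₁ * (1 + |η.1|) ^ (-δ / 2) * (1 + |η.1|) ^ m₁) *
        (((1 + |η.2.1|) ^ k₂ * (1 + |η.2.1|) ^ (-δ / 2) * (1 + |η.2.1|) ^ m₂) *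
        (((1 + |η.2.2.1|) ^ k₃ * ((1 + |η.2.2.1|) ^ N)⁻¹) *
        ((1 + ‖η.2.2.2‖) ^ k₁ * (1 + ‖η.2.2.2‖) ^ k₂ * (1 + ‖η.2.2.2‖) ^ k₃ *
          ((1 + ‖η.2.2.2‖) ^ N)⁻¹)))) := by
        rw [mul_inv]
        ring
      _ ≤ _ := by
        rw [g1, g2]
        gcongr
  have sqr : ∀ {x r : ℝ}, 0 < x → (x ^ r) ^ 2 = x ^ (2 * r) := by
    intro x r hx
    rw [← Real.rpow_natCast, ← Real.rpow_mul hx.le]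
    congr 1
    push_cast
    ring
  rw [Real.norm_of_nonneg (by positivity)]
  refine (pow_le_pow_left₀ (norm_nonneg _) main 2).trans (le_of_eq ?_)
  rw [mul_pow, mul_pow _ (_ * _), mul_pow _ (_ * _), mul_pow _ (_ ^ (-(d + 1) : ℝ)), sqr a1, sqr a2,
    sqr a3', sqr a4']
  congr 2
  · congr 1
    ring
  · congr 1
    · congr 1
      ring
    · congr 2
      · norm_num
      · ring


lemma v1_eq (d : ℕ) (a : ℝ × Par d → ℂ) (y : Sp d) : v1 d a y = Sw d a y.1 (pr1 d y) := rfl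
lemma v2_eq (d : ℕ) (a : ℝ × Par d → ℂ) (y : Sp d) : v2 d a y = Sw d a y.2.1 (pr2 d y) := rfl

lemma w12_eq (d : ℕ) (a₁ a₂ : ℝ × Par d → ℂ) (y : Sp d) :
    w12 d a₁ a₂ y = Sw d a₁ y.1 (Tsc d 0 (pr1 d y)) * Sw d a₂ y.2.1 (Tsc d 0 (pr2 d y)) := by
  unfold w12 Sw
  rw [← integral_prod_mul]
  refine integral_congr_ae (Filter.Eventually.of_forall fun η => ?_)
  simp only [Tsc_apply, zero_mul, pr1_apply, pr2_apply]
  have : Complex.exp (Complex.I * ((y.1 * η.1 + y.2.1 * η.2 : ℝ) : ℂ)) =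
      Complex.exp (Complex.I * ((y.1 * η.1 : ℝ) : ℂ)) *
      Complex.exp (Complex.I * ((y.2.1 * η.2 : ℝ) : ℂ)) := by
    rw [← Complex.exp_add]
    congr 1
    push_cast
    ring
  rw [this]
  ring

lemma diff_eq {d : ℕ} {m : ℝ} (hm : m < -1) {a₁ a₂ : ℝ × Par d → ℂ}
    (ha₁ : IsSymbolP d m a₁) (ha₂ : IsSymbolP d m a₂) (φ : Sp d → ℂ) (y : Sp d) :
    φ y * (v1 d a₁ y * v2 d a₂ y - w12 d a₁ a₂ y) =
      Fun d φ (ampB d 0 a₁) (ampA d a₂) y + Fun d φ (ampA d a₁) (ampB d 1 a₂) y := by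
  have s1 := Sw_sub hm ha₁ y.1 (pr1 d y)
  have s2 := Sw_sub hm ha₂ y.2.1 (pr2 d y)
  have t1 := Sw_mul hm ha₁ (c := 0) y.1 (pr1 d y)
  have t2 := Sw_mul hm ha₂ (c := 1) y.2.1 (pr2 d y)
  have e1 : Tsc d 1 (pr2 d y) = pr2 d y := by rw [Tsc_apply, one_mul]
  rw [e1] at t2
  have f1 : (pr1 d y).1 = y.2.1 := rfl
  have f2 : (pr2 d y).1 = y.1 := rfl
  rw [f1] at s1
  rw [f2] at s2
  rw [v1_eq, v2_eq, w12_eq]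
  unfold Fun
  rw [← t1, ← t2]
  linear_combination (φ y * Sw d a₂ y.2.1 (pr2 d y)) * s1 +
    (φ y * Sw d a₁ y.1 (Tsc d 0 (pr1 d y))) * s2

lemma FT_add {d : ℕ} {F G : Sp d → ℂ} (hF : Continuous F) (hG : Continuous G)
    (hFc : HasCompactSupport F) (hGc : HasCompactSupport G) (η : Sp d) :
    FT d (fun y => F y + G y) η = FT d F η + FT d G η := by
  have hc : Continuous fun y : Sp d => Complex.exp (-(Complex.I * (pairing d y η : ℂ))) := by
    have : Continuous fun y : Sp d => pairing d y η :=
      (pairing_cont d).comp (by fun_prop : Continuous fun y : Sp d => (y, η))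
    fun_prop
  unfold FT
  rw [← integral_add]
  · simp only [mul_add]
  · exact (hc.mul hF).integrable_of_hasCompactSupport hFc.mul_left
  · exact (hc.mul hG).integrable_of_hasCompactSupport hGc.mul_left


/-- **Pairwise-product statement (5.25)–(5.26) of Proposition 5.21:** the product
of two transversal conormal waves equals a product-type conormal distribution
attached to their codimension-two intersection, modulo smoother errors
(expressed on the Fourier transform side). -/
theorem stmt_8 (d : ℕ) (m : ℝ) (hm : m < -1)
    (a₁ a₂ : ℝ × Par d → ℂ)
    (ha₁ : IsSymbolP d m a₁) (ha₂ : IsSymbolP d m a₂)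
    (φ : Sp d → ℂ) (hφ : ContDiff ℝ (⊤ : ℕ∞) φ) (hφc : HasCompactSupport φ)
    (k₃ : ℝ) (hk₃ : 0 ≤ k₃) (δ : ℝ) (hδ : 0 < δ) :
    ∃ e₁ e₂ : Sp d → ℂ,
      Measurable e₁ ∧ Measurable e₂ ∧
      (∀ η : Sp d,
        FT d (fun y => φ y * (v1 d a₁ y * v2 d a₂ y - w12 d a₁ a₂ y)) η = e₁ η + e₂ η) ∧
      MemLp (fun η => W d (-m + 1/2) (-m - 1/2) k₃ δ η • e₁ η) 2 volume ∧
      MemLp (fun η => W d (-m - 1/2) (-m + 1/2) k₃ δ η • e₂ η) 2 volume := by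
  have hA₁ := ampA_isAmp ha₁
  have hA₂ := ampA_isAmp ha₂
  have hB₁ := ampB_isAmp ha₁ (c := 0) (by simp)
  have hB₂ := ampB_isAmp ha₂ (c := 1) (by simp)
  have hm' : m - 1 < -1 := by linarith
  have c1 := Fun_cont hm' hm hB₁ hA₂ hφ.continuous
  have c2 := Fun_cont hm hm' hA₁ hB₂ hφ.continuous
  have m1 := FT_measurable c1
  have m2 := FT_measurable c2
  refine ⟨FT d (Fun d φ (ampB d 0 a₁) (ampA d a₂)), FT d (Fun d φ (ampA d a₁) (ampB d 1 a₂)),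
    m1, m2, ?_, ?_, ?_⟩
  · intro η
    simp only [diff_eq hm ha₁ ha₂ φ]
    exact FT_add c1 c2 hφc.mul_right hφc.mul_right η
  · exact L2_bound (m₁ := m - 1) (m₂ := m) (by ring) (by ring) (by linarith) (by linarith) hk₃ hδ m1
      (fun N => key_bound hm' hm hB₁ hA₂ hφ hφc N)
  · exact L2_bound (m₁ := m) (m₂ := m - 1) (by ring) (by ring) (by linarith) (by linarith) hk₃ hδ m2
      (fun N => key_bound hm hm' hA₁ hB₂ hφ hφc N)
end
end

section
/- Let a, b, x₀₃ ∈ ℝ with t₀ := √(a² + b² + x₀₃²) > 0, and let ξ₀ = (ξ₀₁, ξ₀₂, ξ₀₃) ∈ ℝ³ with τ₀ := √(ξ₀₁²+ξ₀₂²+ξ₀₃²) > 0 and x₀₃ τ₀ + t₀ ξ₀₃ = 0. For s ≥ 0 set t = t₀ + 2τ₀ s, x₁ = a − 2ξ₀₁ s, x₂ = b − 2ξ₀₂ s, x₃ = x₀₃ − 2ξ₀₃ s. Then t·x₀₃ = t₀·x₃, t² − x₃² ≥ 0, and (x₁ − a)² + (x₂ − b)² = (√(t² − x₃²) − √(a²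 + b²))². -/
/-- **The third example: the flow-out Lagrangian lies over the surface
`Q_{a,b}` of equation (2.4).**  With base point `(t₀, a, b, x₀₃) ∈ Γ_{a,b}`,
covector `ξ₀` with `τ₀ = |ξ₀| > 0` and `x₀₃τ₀ + t₀ξ₀₃ = 0`, and flow parameter
`s ≥ 0`, the point `(t, x₁, x₂, x₃)` of the flow-out satisfies
`t·x₀₃ = t₀·x₃`, `t² - x₃² ≥ 0`, and
`(x₁-a)² + (x₂-b)² = (√(t²-x₃²) - √(a²+b²))²`. -/
theorem stmt_12 (a b x₀₃ ξ₀₁ ξ₀₂ ξ₀₃ s t₀ τ₀ t x₁ x₂ x₃ : ℝ)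
    (hs : 0 ≤ s)
    (ht₀ : t₀ = Real.sqrt (a ^ 2 + b ^ 2 + x₀₃ ^ 2)) (ht₀pos : 0 < t₀)
    (hτ₀ : τ₀ = Real.sqrt (ξ₀₁ ^ 2 + ξ₀₂ ^ 2 + ξ₀₃ ^ 2)) (hτ₀pos : 0 < τ₀)
    (hcon : x₀₃ * τ₀ + t₀ * ξ₀₃ = 0)
    (ht : t = t₀ + 2 * τ₀ * s)
    (hx₁ : x₁ = a - 2 * ξ₀₁ * s) (hx₂ : x₂ = b - 2 * ξ₀₂ * s)
    (hx₃ : x₃ = x₀₃ - 2 * ξ₀₃ * s) :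
    t * x₀₃ = t₀ * x₃ ∧
    0 ≤ t ^ 2 - x₃ ^ 2 ∧
    (x₁ - a) ^ 2 + (x₂ - b) ^ 2 =
      (Real.sqrt (t ^ 2 - x₃ ^ 2) - Real.sqrt (a ^ 2 + b ^ 2)) ^ 2 := by
  have hT : t₀ ^ 2 = a ^ 2 + b ^ 2 + x₀₃ ^ 2 := by
    rw [ht₀]; exact Real.sq_sqrt (by positivity)
  have hX : τ₀ ^ 2 = ξ₀₁ ^ 2 + ξ₀₂ ^ 2 + ξ₀₃ ^ 2 := by
    rw [hτ₀]; exact Real.sq_sqrt (by positivity)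
  clear ht₀ hτ₀
  obtain ⟨k, hk0, hk⟩ : ∃ k : ℝ, 0 ≤ k ∧ 2 * τ₀ * s = k * t₀ :=
    ⟨2 * τ₀ * s / t₀, by positivity, by field_simp⟩
  have h3 : 2 * ξ₀₃ * s = -(k * x₀₃) := by
    apply mul_left_cancel₀ ht₀pos.ne'
    linear_combination 2 * s * hcon - x₀₃ * hk
  have e1 : t = (1 + k) * t₀ := by rw [ht, hk]; ring
  have e3 : x₃ = (1 + k) * x₀₃ := by rw [hx₃, h3]; ring
  have key : t ^ 2 - x₃ ^ 2 = (1 + k) ^ 2 * (a ^ 2 + b ^ 2) := by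
    rw [e1, e3]; linear_combination (1 + k) ^ 2 * hT
  refine ⟨by rw [e1, e3]; ring, by rw [key]; positivity, ?_⟩
  rw [key, Real.sqrt_mul (by positivity), Real.sqrt_sq (by positivity)]
  have hr : Real.sqrt (a ^ 2 + b ^ 2) ^ 2 = a ^ 2 + b ^ 2 := Real.sq_sqrt (by positivity)
  rw [hx₁, hx₂]
  linear_combination (-(k ^ 2)) * hr - 4 * s ^ 2 * hX + k ^ 2 * hT +
    (2 * τ₀ * s + k * t₀) * hk - (2 * ξ₀₃ * s - k * x₀₃) * h3
end

section
/- Let n ≥ 3. Let b₁₂, b₁₃, b₂₃ : ℝⁿ → ℝ be C^∞ with b₂₃ nowhere vanishing, let b_{jk} : ℝⁿ → ℝ be C^∞ for 1 ≤ j ≤ n and 4 ≤ k ≤ n, let c₀, c₁, …, c_n : ℝⁿ → ℝ be C^∞, and define the second-order operator P u = b₁₂ ∂₁∂₂u + b₁₃ ∂₁∂₃u + b₂₃ ∂₂∂₃u + ∑_{j=1}^{n} ∑_{k=4}^{n} b_{jk} ∂_j∂_k u + ∑_{j=1}^{n} c_j ∂_j u + c₀ u for u ∈ C^∞(ℝⁿ).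 Then there exist C^∞ functions a₁ : ℝⁿ → ℝ and ℓ^{(r)}_i : ℝⁿ → ℝ, indexed by r ∈ {1} ∪ {4,…,n} ∪ {⋆} and 0 ≤ i ≤ n, such that for every u ∈ C^∞(ℝⁿ): ∂₁(Pu) − P(∂₁u) = a₁·(Pu) + (∑_{i=1}^{n} ℓ^{(1)}_i ∂_i(∂₁u) + ℓ^{(1)}_0 ∂₁u) + ∑_{k=4}^{n} (∑_{i=1}^{n} ℓ^{(k)}_i ∂_i(∂_k u) + ℓ^{(k)}_0 ∂_k u) + (∑_{i=1}^{n} ℓ^{(⋆)}_i ∂_i u + ℓ^{(⋆)}_0 u). -/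
noncomputable section

/-- The partial derivative `∂_i u` of a function on `ℝⁿ = (Fin n → ℝ)`
(coordinates are 0-indexed: `∂_1` of the paper is `pd n ⟨0,_⟩`, etc.). -/
def pd (n : ℕ) (i : Fin n) (u : (Fin n → ℝ) → ℝ) : (Fin n → ℝ) → ℝ :=
  fun y => fderiv ℝ u y (Pi.single i 1)

/-- The second-order operator in normal form (5.8):
`P u = b₁₂ ∂₁∂₂u + b₁₃ ∂₁∂₃u + b₂₃ ∂₂∂₃u + ∑_{j=1}^{n} ∑_{k=4}^{n} b_{jk} ∂_j∂_k u
      + ∑_{j=1}^{n} c_j ∂_j u + c₀ u`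
(0-indexed: the three distinguished coordinates are `0,1,2`, and `k` ranges over
the indices with `3 ≤ k`). -/
def Pop (n : ℕ) (hn : 3 ≤ n)
    (b₁₂ b₁₃ b₂₃ : (Fin n → ℝ) → ℝ) (B : Fin n → Fin n → (Fin n → ℝ) → ℝ)
    (c₀ : (Fin n → ℝ) → ℝ) (c : Fin n → (Fin n → ℝ) → ℝ)
    (u : (Fin n → ℝ) → ℝ) : (Fin n → ℝ) → ℝ :=
  fun y =>
    b₁₂ y * pd n ⟨0, by omega⟩ (pd n ⟨1, by omega⟩ u) y +
    b₁₃ y * pd n ⟨0, by omega⟩ (pd n ⟨2, by omega⟩ u) y +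
    b₂₃ y * pd n ⟨1, by omega⟩ (pd n ⟨2, by omega⟩ u) y +
    (∑ j : Fin n, ∑ k : Fin n, if 3 ≤ (k : ℕ) then B j k y * pd n j (pd n k u) y else 0) +
    (∑ j : Fin n, c j y * pd n j u y) + c₀ y * u y

lemma pd_smooth {n : ℕ} (i : Fin n) {u : (Fin n → ℝ) → ℝ} (hu : ContDiff ℝ (⊤ : ℕ∞) u) :
    ContDiff ℝ (⊤ : ℕ∞) (pd n i u) := by
  unfold pd
  exact (hu.fderiv_right (m := (⊤ : ℕ∞)) (by simp)).clm_apply contDiff_const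

lemma pd_diff' {n : ℕ} {u : (Fin n → ℝ) → ℝ} (hu : ContDiff ℝ (⊤ : ℕ∞) u) (y : Fin n → ℝ) :
    DifferentiableAt ℝ u y := (hu.differentiable (by simp)) y

lemma pd_comm {n : ℕ} (i j : Fin n) {u : (Fin n → ℝ) → ℝ} (hu : ContDiff ℝ (⊤ : ℕ∞) u) :
    pd n i (pd n j u) = pd n j (pd n i u) := by
  funext y
  have h1 : DifferentiableAt ℝ (fderiv ℝ u) y :=
    ((hu.fderiv_right (m := (⊤ : ℕ∞)) (by simp)).differentiable (by simp)) y
  have hs : IsSymmSndFDerivAt ℝ u y := by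
    apply hu.contDiffAt.isSymmSndFDerivAt
    simp only [minSmoothness_of_isRCLikeNormedField]
    exact WithTop.coe_le_coe.2 (le_top : (2 : ℕ∞) ≤ ⊤)
  unfold pd
  rw [fderiv_clm_apply h1 (by fun_prop), fderiv_clm_apply h1 (by fun_prop)]
  simpa using hs _ _

lemma pd_add {n : ℕ} (i : Fin n) {f g : (Fin n → ℝ) → ℝ} (hf : ContDiff ℝ (⊤ : ℕ∞) f)
    (hg : ContDiff ℝ (⊤ : ℕ∞) g) (y : Fin n → ℝ) :
    pd n i (fun y => f y + g y) y = pd n i f y + pd n i g y := by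
  unfold pd
  rw [fderiv_fun_add (pd_diff' hf y) (pd_diff' hg y)]; rfl

lemma pd_mul {n : ℕ} (i : Fin n) {f g : (Fin n → ℝ) → ℝ} (hf : ContDiff ℝ (⊤ : ℕ∞) f)
    (hg : ContDiff ℝ (⊤ : ℕ∞) g) (y : Fin n → ℝ) :
    pd n i (fun y => f y * g y) y = pd n i f y * g y + f y * pd n i g y := by
  unfold pd
  rw [fderiv_fun_mul (pd_diff' hf y) (pd_diff' hg y)]
  simp; ring

lemma pd_sum {n : ℕ} (i : Fin n) {f : Fin n → (Fin n → ℝ) → ℝ}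
    (hf : ∀ j, ContDiff ℝ (⊤ : ℕ∞) (f j)) (y : Fin n → ℝ) :
    pd n i (fun y => ∑ j, f j y) y = ∑ j, pd n i (f j) y := by
  unfold pd
  rw [fderiv_fun_sum (fun j _ => pd_diff' (hf j) y)]
  simp

lemma ite_smooth {n : ℕ} (p : Prop) [Decidable p] {f : (Fin n → ℝ) → ℝ}
    (hf : ContDiff ℝ (⊤ : ℕ∞) f) : ContDiff ℝ (⊤ : ℕ∞) (fun y => if p then f y else 0) := by
  by_cases h : p
  · simpa [h] using hf
  · simpa [h] using contDiff_const

lemma pd_ite {n : ℕ} (i : Fin n) (p : Prop) [Decidable p] (f : (Fin n → ℝ) → ℝ)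
    (y : Fin n → ℝ) :
    pd n i (fun y => if p then f y else 0) y = if p then pd n i f y else 0 := by
  by_cases h : p
  · simp [h]
  · simp [h, pd]

lemma Pop_comm (n : ℕ) (hn : 3 ≤ n)
    (b₁₂ b₁₃ b₂₃ : (Fin n → ℝ) → ℝ)
    (hb₁₂ : ContDiff ℝ (⊤ : ℕ∞) b₁₂) (hb₁₃ : ContDiff ℝ (⊤ : ℕ∞) b₁₃) (hb₂₃ : ContDiff ℝ (⊤ : ℕ∞) b₂₃)
    (B : Fin n → Fin n → (Fin n → ℝ) → ℝ) (hB : ∀ j k, ContDiff ℝ (⊤ : ℕ∞) (B j k))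
    (c₀ : (Fin n → ℝ) → ℝ) (hc₀ : ContDiff ℝ (⊤ : ℕ∞) c₀)
    (c : Fin n → (Fin n → ℝ) → ℝ) (hc : ∀ j, ContDiff ℝ (⊤ : ℕ∞) (c j)) (i : Fin n)
    (u : (Fin n → ℝ) → ℝ) (hu : ContDiff ℝ (⊤ : ℕ∞) u) (y : Fin n → ℝ) :
    pd n i (Pop n hn b₁₂ b₁₃ b₂₃ B c₀ c u) y = Pop n hn b₁₂ b₁₃ b₂₃ B c₀ c (pd n i u) y +
     Pop n hn (pd n i b₁₂) (pd n i b₁₃) (pd n i b₂₃) (fun j k => pd n i (B j k)) (pd n i c₀)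
      (fun j => pd n i (c j)) u y := by
  have h1 := fun j => pd_smooth j hu
  have h2 := fun j k => pd_smooth j (h1 k)
  have m2 : ∀ j k, ∀ b : (Fin n → ℝ) → ℝ, ContDiff ℝ (⊤ : ℕ∞) b →
    ContDiff ℝ (⊤ : ℕ∞) (fun y => b y * pd n j (pd n k u) y) := fun j k b hb => hb.mul (h2 j k)
  have m3 : ∀ j k : Fin n, ContDiff ℝ (⊤ : ℕ∞)
      (fun y => if 3 ≤ (k : ℕ) then B j k y * pd n j (pd n k u) y else 0) :=
    fun j k => ite_smooth _ (m2 j k _ (hB j k))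
  have m4 : ∀ j, ContDiff ℝ (⊤ : ℕ∞)
      (fun y => ∑ k : Fin n, if 3 ≤ (k : ℕ) then B j k y * pd n j (pd n k u) y else 0) :=
    fun j => ContDiff.sum fun k _ => m3 j k
  have m5 : ∀ j, ContDiff ℝ (⊤ : ℕ∞) (fun y => c j y * pd n j u y) := fun j => (hc j).mul (h1 j)
  have a1 := m2 ⟨0, by omega⟩ ⟨1, by omega⟩ _ hb₁₂
  have a2 := m2 ⟨0, by omega⟩ ⟨2, by omega⟩ _ hb₁₃
  have a3 := m2 ⟨1, by omega⟩ ⟨2, by omega⟩ _ hb₂₃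
  have a4 : ContDiff ℝ (⊤ : ℕ∞) _ := ContDiff.sum (s := Finset.univ) fun j _ => m4 j
  have a5 : ContDiff ℝ (⊤ : ℕ∞) _ := ContDiff.sum (s := Finset.univ) fun j _ => m5 j
  have e2 : ∀ j k, ∀ b : (Fin n → ℝ) → ℝ, ContDiff ℝ (⊤ : ℕ∞) b →
      pd n i (fun y => b y * pd n j (pd n k u) y) y =
      pd n i b y * pd n j (pd n k u) y + b y * pd n j (pd n k (pd n i u)) y := by
    intro j k b hb
    rw [pd_mul i hb (h2 j k), pd_comm i j (h1 k), pd_comm i k hu]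
  have e4 : pd n i (fun y => ∑ j : Fin n, ∑ k : Fin n,
        if 3 ≤ (k : ℕ) then B j k y * pd n j (pd n k u) y else 0) y =
      (∑ j : Fin n, ∑ k : Fin n,
        if 3 ≤ (k : ℕ) then pd n i (B j k) y * pd n j (pd n k u) y else 0) +
      (∑ j : Fin n, ∑ k : Fin n,
        if 3 ≤ (k : ℕ) then B j k y * pd n j (pd n k (pd n i u)) y else 0) := by
    rw [pd_sum i m4, ← Finset.sum_add_distrib]
    refine Finset.sum_congr rfl fun j _ => ?_
    rw [pd_sum i (m3 j), ← Finset.sum_add_distrib]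
    refine Finset.sum_congr rfl fun k _ => ?_
    rw [pd_ite, e2 j k _ (hB j k)]
    split_ifs <;> simp
  have e5 : pd n i (fun y => ∑ j : Fin n, c j y * pd n j u y) y =
      (∑ j : Fin n, pd n i (c j) y * pd n j u y) +
      (∑ j : Fin n, c j y * pd n j (pd n i u) y) := by
    rw [pd_sum i m5, ← Finset.sum_add_distrib]
    refine Finset.sum_congr rfl fun j _ => ?_
    rw [pd_mul i (hc j) (h1 j), pd_comm i j hu]
  unfold Pop
  rw [pd_add i ((((a1.add a2).add a3).add a4).add a5) (hc₀.mul hu),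
    pd_add i (((a1.add a2).add a3).add a4) a5, pd_add i ((a1.add a2).add a3) a4,
    pd_add i (a1.add a2) a3, pd_add i a1 a2, e2 _ _ _ hb₁₂, e2 _ _ _ hb₁₃, e2 _ _ _ hb₂₃, e4, e5,
    pd_mul i hc₀ hu]
  ring

/-- **The commutator identity (5.17) in the proof of Proposition 5.13 (Bony's
commutator method):** for `P` in the normal form (5.8) with `b₂₃` nowhere
vanishing, `[∂₁, P] u = a₁·(Pu)` plus first-order operators applied to `∂₁u`,
to `∂_k u` for `k ≥ 4`, and to `u`, with smooth coefficients. -/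
theorem stmt_13 (n : ℕ) (hn : 3 ≤ n)
    (b₁₂ b₁₃ b₂₃ : (Fin n → ℝ) → ℝ)
    (hb₁₂ : ContDiff ℝ (⊤ : ℕ∞) b₁₂) (hb₁₃ : ContDiff ℝ (⊤ : ℕ∞) b₁₃) (hb₂₃ : ContDiff ℝ (⊤ : ℕ∞) b₂₃)
    (hb₂₃ne : ∀ y, b₂₃ y ≠ 0)
    (B : Fin n → Fin n → (Fin n → ℝ) → ℝ) (hB : ∀ j k, ContDiff ℝ (⊤ : ℕ∞) (B j k))
    (c₀ : (Fin n → ℝ) → ℝ) (hc₀ : ContDiff ℝ (⊤ : ℕ∞) c₀)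
    (c : Fin n → (Fin n → ℝ) → ℝ) (hc : ∀ j, ContDiff ℝ (⊤ : ℕ∞) (c j)) :
    ∃ (a₁ : (Fin n → ℝ) → ℝ) (ℓ₁ : Fin n → (Fin n → ℝ) → ℝ) (ℓ₁₀ : (Fin n → ℝ) → ℝ)
      (L : Fin n → Fin n → (Fin n → ℝ) → ℝ) (L₀ : Fin n → (Fin n → ℝ) → ℝ)
      (ℓs : Fin n → (Fin n → ℝ) → ℝ) (ℓs₀ : (Fin n → ℝ) → ℝ),
      ContDiff ℝ (⊤ : ℕ∞) a₁ ∧ (∀ i, ContDiff ℝ (⊤ : ℕ∞) (ℓ₁ i)) ∧ ContDiff ℝ (⊤ : ℕ∞) ℓ₁₀ ∧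
      (∀ k i, ContDiff ℝ (⊤ : ℕ∞) (L k i)) ∧ (∀ k, ContDiff ℝ (⊤ : ℕ∞) (L₀ k)) ∧
      (∀ i, ContDiff ℝ (⊤ : ℕ∞) (ℓs i)) ∧ ContDiff ℝ (⊤ : ℕ∞) ℓs₀ ∧
      ∀ u : (Fin n → ℝ) → ℝ, ContDiff ℝ (⊤ : ℕ∞) u → ∀ y : Fin n → ℝ,
        pd n ⟨0, by omega⟩ (Pop n hn b₁₂ b₁₃ b₂₃ B c₀ c u) y -
            Pop n hn b₁₂ b₁₃ b₂₃ B c₀ c (pd n ⟨0, by omega⟩ u) y =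
          a₁ y * Pop n hn b₁₂ b₁₃ b₂₃ B c₀ c u y +
          ((∑ i : Fin n, ℓ₁ i y * pd n i (pd n ⟨0, by omega⟩ u) y) +
            ℓ₁₀ y * pd n ⟨0, by omega⟩ u y) +
          (∑ k : Fin n, if 3 ≤ (k : ℕ) then
            ((∑ i : Fin n, L k i y * pd n i (pd n k u) y) + L₀ k y * pd n k u y) else 0) +
          ((∑ i : Fin n, ℓs i y * pd n i u y) + ℓs₀ y * u y) := by
  have hinv : ContDiff ℝ (⊤ : ℕ∞) (fun y => pd n ⟨0, by omega⟩ b₂₃ y / b₂₃ y) :=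
    (pd_smooth _ hb₂₃).div hb₂₃ hb₂₃ne
  obtain ⟨a, ha, hab⟩ : ∃ a : (Fin n → ℝ) → ℝ, ContDiff ℝ (⊤ : ℕ∞) a ∧
      ∀ y, pd n ⟨0, by omega⟩ b₂₃ y = a y * b₂₃ y :=
    ⟨_, hinv, fun y => (div_mul_cancel₀ _ (hb₂₃ne y)).symm⟩
  have hs : ∀ b : (Fin n → ℝ) → ℝ, ContDiff ℝ (⊤ : ℕ∞) b →
      ContDiff ℝ (⊤ : ℕ∞) (fun y => pd n ⟨0, by omega⟩ b y - a y * b y) :=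
    fun b hb => (pd_smooth _ hb).sub (ha.mul hb)
  refine ⟨a,
    fun i y => (if i = ⟨1, by omega⟩ then pd n ⟨0, by omega⟩ b₁₂ y - a y * b₁₂ y else 0) +
      (if i = ⟨2, by omega⟩ then pd n ⟨0, by omega⟩ b₁₃ y - a y * b₁₃ y else 0), fun _ => 0,
    fun k i y => pd n ⟨0, by omega⟩ (B i k) y - a y * B i k y, fun _ _ => 0,
    fun i y => pd n ⟨0, by omega⟩ (c i) y - a y * c i y,
    fun y => pd n ⟨0, by omega⟩ c₀ y - a y * c₀ y, ha,
    fun i => (ite_smooth _ (hs _ hb₁₂)).add (ite_smooth _ (hs _ hb₁₃)), contDiff_const,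
    fun k i => hs _ (hB i k), fun _ => contDiff_const, fun i => hs _ (hc i), hs _ hc₀, ?_⟩
  intro u hu y
  rw [Pop_comm n hn b₁₂ b₁₃ b₂₃ hb₁₂ hb₁₃ hb₂₃ B hB c₀ hc₀ c hc _ u hu y, add_sub_cancel_left]
  have s1 : (∑ k : Fin n, if 3 ≤ (k : ℕ) then
      ((∑ i : Fin n, (pd n ⟨0, by omega⟩ (B i k) y - a y * B i k y) * pd n i (pd n k u) y)
        + 0 * pd n k u y) else 0) =
      (∑ j : Fin n, ∑ k : Fin n,
        if 3 ≤ (k : ℕ) then pd n ⟨0, by omega⟩ (B j k) y * pd n j (pd n k u) y else 0) -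
      a y * (∑ j : Fin n, ∑ k : Fin n,
        if 3 ≤ (k : ℕ) then B j k y * pd n j (pd n k u) y else 0) := by
    rw [Finset.mul_sum, ← Finset.sum_sub_distrib]
    simp_rw [Finset.mul_sum, ← Finset.sum_sub_distrib]
    rw [Finset.sum_comm]
    refine Finset.sum_congr rfl fun k _ => ?_
    split_ifs
    · rw [zero_mul, add_zero]
      exact Finset.sum_congr rfl fun j _ => by ring
    · simp
  have s2 : (∑ i : Fin n, (pd n ⟨0, by omega⟩ (c i) y - a y * c i y) * pd n i u y) =
      (∑ j : Fin n, pd n ⟨0, by omega⟩ (c j) y * pd n j u y) -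
      a y * (∑ j : Fin n, c j y * pd n j u y) := by
    rw [Finset.mul_sum, ← Finset.sum_sub_distrib]
    exact Finset.sum_congr rfl fun j _ => by ring
  have s3 : ∀ p q : ℝ, (∑ i : Fin n, ((if i = ⟨1, by omega⟩ then p else 0) +
      (if i = ⟨2, by omega⟩ then q else 0)) * pd n i (pd n ⟨0, by omega⟩ u) y) =
      p * pd n ⟨0, by omega⟩ (pd n ⟨1, by omega⟩ u) y +
      q * pd n ⟨0, by omega⟩ (pd n ⟨2, by omega⟩ u) y := by
    intro p q
    rw [pd_comm ⟨0, by omega⟩ ⟨1, by omega⟩ hu, pd_comm ⟨0, by omega⟩ ⟨2, by omega⟩ hu]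
    simp [add_mul, Finset.sum_add_distrib]
  rw [s1, s2, s3]
  unfold Pop
  rw [hab]
  ring
end
end

section
/- Let m < −1, let a ∈ S^m(ℝ), and let k be the unique nonnegative integer with −m−2 ≤ k < −m−1. Then there exist b ∈ S^{m+k}(ℝ) and a compactly supported C^∞ function c : ℝ → ℂ such that a = i^k b^{(k)} + c. Consequently, setting u(x) = ∫_ℝ e^{ixη} a(η) dη and w(x) = ∫_ℝ e^{ixη} b(η) dη (both integrals absolutely convergent, since m < −1 and m+k < −1), the function x ↦ u(x) − x^k w(x) is C^∞ on ℝ. -/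
open MeasureTheory

noncomputable section

/-- The symbol class `S^m(ℝ)`: `a` is smooth and `|a^{(k)}(s)| ≤ C_k (1+|s|)^{m-k}`. -/
def IsSymbol (m : ℝ) (a : ℝ → ℂ) : Prop :=
  ContDiff ℝ (⊤ : ℕ∞) a ∧ ∀ k : ℕ, ∃ C : ℝ, ∀ s : ℝ,
    ‖iteratedDeriv k a s‖ ≤ C * (1 + |s|) ^ (m - k)

open Set Filter Topology
open scoped ContDiff FourierTransform

lemma tail_bound {m : ℝ} (hm : m < -1) {g : ℝ → ℂ} {C : ℝ}
    (hg : ∀ t, ‖g t‖ ≤ C * (1 + |t|) ^ m) {s : ℝ} (hs : 0 ≤ s) :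
    ‖∫ t in Ioi s, g t‖ ≤ (C / (-m - 1)) * (1 + |s|) ^ (m + 1) := by
  have hint : IntegrableOn (fun t : ℝ => (t + 1) ^ m) (Ioi s) :=
    integrableOn_add_rpow_Ioi_of_lt hm (by linarith)
  have hval : ∫ t in Ioi s, (t + 1) ^ m = - (s + 1) ^ (m + 1) / (m + 1) := by
    have hd : ∀ x ∈ Ici s, HasDerivAt (fun t : ℝ ↦ (t + 1) ^ (m + 1) / (m + 1)) ((x + 1) ^ m) x := by
      intro x hx
      have hx' : s ≤ x := hx
      convert! (((hasDerivAt_id x).add_const 1).rpow_const (p := m + 1)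
        (Or.inl (by simp; linarith))).div_const (m + 1) using 1
      simp [show m + 1 ≠ 0 by linarith]
    have ht : Tendsto (fun t : ℝ => (t + 1) ^ (m + 1) / (m + 1)) atTop (𝓝 (0 / (m + 1))) := by
      refine Tendsto.div_const ?_ _
      have := (tendsto_rpow_neg_atTop (y := -(m+1)) (by linarith)).comp
        (tendsto_atTop_add_const_right atTop (1 : ℝ) tendsto_id)
      simpa [Function.comp_def] using this
    rw [integral_Ioi_of_hasDerivAt_of_tendsto' hd hint ht]
    ring
  have h1 : ‖∫ t in Ioi s, g t‖ ≤ ∫ t in Ioi s, C * (t + 1) ^ m := by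
    apply norm_integral_le_of_norm_le (hint.const_mul C)
    refine (ae_restrict_iff' measurableSet_Ioi).2 (Eventually.of_forall fun t ht => ?_)
    have h2 : (0 : ℝ) ≤ t := hs.trans (le_of_lt ht)
    have := hg t
    rwa [abs_of_nonneg h2, add_comm] at this
  rw [integral_const_mul, hval] at h1
  refine h1.trans (le_of_eq ?_)
  rw [abs_of_nonneg hs, add_comm 1 s]
  have : m + 1 ≠ 0 := by linarith
  have : -m - 1 ≠ 0 := by linarith
  field_simp
  ring

lemma IsSymbol.integrable_iteratedDeriv {m : ℝ} (hm : m < -1) {a : ℝ → ℂ} (ha : IsSymbol m a)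
    (n : ℕ) : Integrable (iteratedDeriv n a) := by
  obtain ⟨C, hC⟩ := ha.2 n
  have h1 : Integrable (fun x : ℝ => (1 + ‖x‖) ^ (-(-(m - n)))) := by
    apply integrable_one_add_norm
    simp
    have : (0 : ℝ) ≤ n := Nat.cast_nonneg n
    linarith
  refine (h1.const_mul C).mono' ?_ (Eventually.of_forall fun x => ?_)
  · exact (ha.1.continuous_iteratedDeriv n (by exact_mod_cast le_top)).aestronglyMeasurable
  · simpa using hC x

lemma IsSymbol.integrable {m : ℝ} (hm : m < -1) {a : ℝ → ℂ} (ha : IsSymbol m a) :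
    Integrable a := by
  simpa using ha.integrable_iteratedDeriv hm 0

lemma hcs_iteratedDeriv {c : ℝ → ℂ} (hc : HasCompactSupport c) (n : ℕ) :
    HasCompactSupport (iteratedDeriv n c) := by
  induction n with
  | zero => simpa using hc
  | succ n ih => rw [iteratedDeriv_succ]; exact ih.deriv

lemma isSymbol_of_hcs (m : ℝ) {c : ℝ → ℂ} (h : ContDiff ℝ (⊤ : ℕ∞) c) (hc : HasCompactSupport c) :
    IsSymbol m c := by
  refine ⟨h, fun n => ?_⟩
  have hcont := h.continuous_iteratedDeriv n (by exact_mod_cast le_top)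
  have hF : Continuous (fun s : ℝ => (((1 + |s|) ^ (-(m - n)) : ℝ) : ℂ) * iteratedDeriv n c s) := by
    refine (Complex.continuous_ofReal.comp ?_).mul hcont
    refine Continuous.rpow_const (by fun_prop) fun s => Or.inl ?_
    positivity
  obtain ⟨C, hC⟩ := (HasCompactSupport.mul_left (hcs_iteratedDeriv hc n)
    (f := fun s : ℝ => (((1 + |s|) ^ (-(m - n)) : ℝ) : ℂ))).exists_bound_of_continuous hF
  refine ⟨C, fun s => ?_⟩
  have hp : (0 : ℝ) < 1 + |s| := by positivity
  have h1 := hC s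
  rw [Pi.mul_apply, norm_mul, Complex.norm_real, Real.norm_of_nonneg (by positivity),
    Real.rpow_neg hp.le, inv_mul_le_iff₀ (by positivity)] at h1
  linarith

lemma IsSymbol.sub {m : ℝ} {a b : ℝ → ℂ} (ha : IsSymbol m a) (hb : IsSymbol m b) :
    IsSymbol m (a - b) := by
  refine ⟨ha.1.sub hb.1, fun n => ?_⟩
  obtain ⟨C, hC⟩ := ha.2 n
  obtain ⟨D, hD⟩ := hb.2 n
  refine ⟨C + D, fun s => ?_⟩
  rw [iteratedDeriv_sub (ha.1.contDiffAt.of_le (by exact_mod_cast le_top))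
    (hb.1.contDiffAt.of_le (by exact_mod_cast le_top)), add_mul]
  exact (norm_sub_le _ _).trans (add_le_add (hC s) (hD s))

lemma IsSymbol.const_mul {m : ℝ} {a : ℝ → ℂ} (ha : IsSymbol m a) (z : ℂ) :
    IsSymbol m (fun x => z * a x) := by
  refine ⟨contDiff_const.mul ha.1, fun n => ?_⟩
  obtain ⟨C, hC⟩ := ha.2 n
  refine ⟨‖z‖ * C, fun s => ?_⟩
  rw [iteratedDeriv_const_mul_field, norm_mul, mul_assoc]
  exact mul_le_mul_of_nonneg_left (hC s) (norm_nonneg _)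

lemma step {m : ℝ} (hm : m < -1) {a : ℝ → ℂ} (ha : IsSymbol m a) :
    ∃ b c : ℝ → ℂ, IsSymbol (m + 1) b ∧ ContDiff ℝ (⊤ : ℕ∞) c ∧ HasCompactSupport c ∧
      ∀ x, a x = deriv b x + c x := by
  let φ : ContDiffBump (0 : ℝ) := default
  let c : ℝ → ℂ := fun x => (∫ t, a t) * ((φ.normed volume x : ℝ) : ℂ)
  have hc1 : ContDiff ℝ (⊤ : ℕ∞) c :=
    contDiff_const.mul (Complex.ofRealCLM.contDiff.comp φ.contDiff_normed)
  have hc2 : HasCompactSupport c := by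
    have h0 : HasCompactSupport (fun x => ((φ.normed volume x : ℝ) : ℂ)) :=
      φ.hasCompactSupport_normed.comp_left (g := fun x : ℝ => (x : ℂ)) (by simp)
    exact h0.mul_left
  have hcs := isSymbol_of_hcs m hc1 hc2
  have hf := ha.sub hcs
  set f := a - c with hfdef
  have hfi : Integrable f := hf.integrable hm
  have hf0 : ∫ t, f t = 0 := by
    have : ∫ t, f t = (∫ t, a t) - ∫ t, c t := integral_sub (ha.integrable hm) (hcs.integrable hm)
    rw [this, integral_const_mul, integral_complex_ofReal, φ.integral_normed]
    simp
  let b : ℝ → ℂ := fun s => ∫ t in Iic s, f t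
  have hfc : Continuous f := hf.1.continuous
  have hb' : ∀ s, HasDerivAt b (f s) s := by
    intro s
    have h1 : b = fun s => (∫ t in Iic (0 : ℝ), f t) + ∫ t in (0 : ℝ)..s, f t := by
      ext s
      rw [← intervalIntegral.integral_Iic_sub_Iic hfi.integrableOn hfi.integrableOn]
      simp [b]
    rw [h1]
    exact (intervalIntegral.integral_hasDerivAt_right (hfc.intervalIntegrable _ _)
      (hfc.stronglyMeasurableAtFilter _ _) hfc.continuousAt).const_add _
  have hbd : deriv b = f := funext fun s => (hb' s).deriv
  refine ⟨b, c, ⟨?_, ?_⟩, hc1, hc2, fun x => ?_⟩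
  · refine contDiff_infty_iff_deriv.2 ⟨fun s => (hb' s).differentiableAt, ?_⟩
    rw [hbd]; exact hf.1
  · intro n
    cases n with
    | zero =>
      obtain ⟨C, hC⟩ := hf.2 0
      simp only [iteratedDeriv_zero, Nat.cast_zero, sub_zero] at hC ⊢
      refine ⟨C / (-m - 1), fun s => ?_⟩
      rcases le_total 0 s with hs | hs
      · have : b s = - ∫ t in Ioi s, f t := by
          rw [eq_neg_iff_add_eq_zero, ← hf0]
          exact intervalIntegral.integral_Iic_add_Ioi hfi.integrableOn hfi.integrableOn
        rw [this, norm_neg]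
        exact tail_bound hm hC hs
      · have : b s = ∫ t in Ioi (-s), f (-t) := by
          rw [integral_comp_neg_Ioi]; simp [b]
        rw [this, ← abs_neg s]
        exact tail_bound hm (fun t => by simpa using hC (-t)) (by linarith)
    | succ n =>
      obtain ⟨C, hC⟩ := hf.2 n
      refine ⟨C, fun s => ?_⟩
      rw [iteratedDeriv_succ', hbd]
      convert hC s using 3
      push_cast; ring
  · rw [hbd]; simp [hfdef]

lemma steps (k : ℕ) : ∀ {m : ℝ}, m + k < -1 → ∀ {a : ℝ → ℂ}, IsSymbol m a →
    ∃ b c : ℝ → ℂ, IsSymbol (m + k) b ∧ ContDiff ℝ (⊤ : ℕ∞) c ∧ HasCompactSupport c ∧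
      ∀ x, a x = iteratedDeriv k b x + c x := by
  induction k with
  | zero =>
    intro m _ a ha
    exact ⟨a, 0, by simpa using ha, contDiff_const, HasCompactSupport.zero, by simp⟩
  | succ k ih =>
    intro m hm a ha
    push_cast at hm
    have hk : (0 : ℝ) ≤ k := Nat.cast_nonneg k
    obtain ⟨b, c, hb, hc, hc', h⟩ := ih (by linarith) ha
    obtain ⟨d, e, hd, he, he', h'⟩ := step (by linarith) hb
    have hdd : ContDiff ℝ (⊤ : ℕ∞) (deriv d) := (contDiff_infty_iff_deriv.1 hd.1).2
    refine ⟨d, iteratedDeriv k e + c, ?_, ?_, ?_, fun x => ?_⟩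
    · convert hd using 1; push_cast; ring
    · rw [iteratedDeriv_eq_iterate]
      exact (ContDiff.iterate_deriv k he).add hc
    · exact (hcs_iteratedDeriv he' k).add hc'
    · have hbe : b = deriv d + e := funext h'
      rw [h x, hbe, iteratedDeriv_add (hdd.contDiffAt.of_le (by exact_mod_cast le_top))
        (he.contDiffAt.of_le (by exact_mod_cast le_top)), iteratedDeriv_succ']
      simp [add_assoc]

lemma four_eq (f : ℝ → ℂ) (x : ℝ) :
    (∫ η : ℝ, Complex.exp (Complex.I * ((x * η : ℝ) : ℂ)) * f η) = 𝓕 f (-(x / (2 * Real.pi))) := by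
  rw [Real.fourier_real_eq_integral_exp_smul]
  congr 1
  ext η
  rw [smul_eq_mul]
  congr 2
  rw [mul_comm]
  congr 2
  field_simp [Real.pi_ne_zero]

/-- **One-dimensional core of the Piriou/Rauch–Reed decomposition (4.4):**
for `a ∈ S^m(ℝ)` with `m < -1` and `k` the unique nonnegative integer with
`-m-2 ≤ k < -m-1`, one can write `a = i^k b^{(k)} + c` with `b ∈ S^{m+k}(ℝ)`
and `c` smooth with compact support; consequently
`u(x) - x^k w(x)` is `C^∞`, where `u(x) = ∫ e^{ixη} a(η) dη` and
`w(x) = ∫ e^{ixη} b(η) dη`. -/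
theorem stmt_15 (m : ℝ) (hm : m < -1) (a : ℝ → ℂ) (ha : IsSymbol m a)
    (k : ℕ) (hk₁ : -m - 2 ≤ (k : ℝ)) (hk₂ : (k : ℝ) < -m - 1) :
    ∃ b c : ℝ → ℂ, IsSymbol (m + k) b ∧ ContDiff ℝ (⊤ : ℕ∞) c ∧ HasCompactSupport c ∧
      (∀ η : ℝ, a η = Complex.I ^ k * iteratedDeriv k b η + c η) ∧
      ContDiff ℝ (⊤ : ℕ∞) (fun x : ℝ =>
        (∫ η : ℝ, Complex.exp (Complex.I * ((x * η : ℝ) : ℂ)) * a η ∂volume) -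
          (x : ℂ) ^ k * ∫ η : ℝ, Complex.exp (Complex.I * ((x * η : ℝ) : ℂ)) * b η ∂volume) := by
  obtain ⟨b₀, c, hb₀, hc, hc', h₀⟩ := steps k (by linarith) ha
  have hb := hb₀.const_mul ((Complex.I ^ k)⁻¹)
  have hI : Complex.I ^ k ≠ 0 := pow_ne_zero _ Complex.I_ne_zero
  set b : ℝ → ℂ := fun x => (Complex.I ^ k)⁻¹ * b₀ x with hbdef
  have h : ∀ η : ℝ, a η = Complex.I ^ k * iteratedDeriv k b η + c η := by
    intro η
    rw [h₀, hbdef, iteratedDeriv_const_mul_field, mul_inv_cancel_left₀ hI]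
  refine ⟨b, c, hb, hc, hc', h, ?_⟩
  have hmk : m + k < -1 := by linarith
  have hbi := fun n => hb.integrable_iteratedDeriv hmk n
  have hci : Integrable c := hc.continuous.integrable_of_hasCompactSupport hc'
  have key : (fun x : ℝ =>
        (∫ η : ℝ, Complex.exp (Complex.I * ((x * η : ℝ) : ℂ)) * a η ∂volume) -
          (x : ℂ) ^ k * ∫ η : ℝ, Complex.exp (Complex.I * ((x * η : ℝ) : ℂ)) * b η ∂volume)
      = fun x : ℝ => 𝓕 c (-(x / (2 * Real.pi))) := by
    ext x
    have hE : ∀ g : ℝ → ℂ, Integrable g →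
        Integrable (fun η : ℝ => Complex.exp (Complex.I * ((x * η : ℝ) : ℂ)) * g η) := by
      intro g hg
      refine hg.bdd_mul (c := 1) (by fun_prop) (Eventually.of_forall fun η => ?_)
      rw [mul_comm, Complex.norm_exp_ofReal_mul_I]
    have h1 : (∫ η : ℝ, Complex.exp (Complex.I * ((x * η : ℝ) : ℂ)) * a η) =
        Complex.I ^ k * (∫ η : ℝ, Complex.exp (Complex.I * ((x * η : ℝ) : ℂ)) * iteratedDeriv k b η)
        + ∫ η : ℝ, Complex.exp (Complex.I * ((x * η : ℝ) : ℂ)) * c η := by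
      rw [← integral_const_mul, ← integral_add ((hE _ (hbi k)).const_mul _) (hE _ hci)]
      congr 1
      ext η
      rw [h η]; ring
    rw [h1, four_eq, four_eq, four_eq,
      Real.fourier_iteratedDeriv (N := ⊤) hb.1 (fun n _ => hbi n) le_top]
    simp only [smul_eq_mul]
    have h2 : (2 * Real.pi * Complex.I * ((-(x / (2 * Real.pi)) : ℝ) : ℂ)) = -Complex.I * x := by
      have : (Real.pi : ℂ) ≠ 0 := by exact_mod_cast Real.pi_ne_zero
      push_cast
      field_simp
    rw [h2, ← mul_assoc, ← mul_pow]
    have h3 : Complex.I * (-Complex.I * x) = x := by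
      rw [← mul_assoc, mul_neg, Complex.I_mul_I]; simp
    rw [h3]; ring
  rw [key]
  have hF : ContDiff ℝ (⊤ : ℕ∞) (𝓕 c) := by
    apply Real.contDiff_fourier
    intro n _
    refine Continuous.integrable_of_hasCompactSupport ?_ ?_
    · have := hc.continuous; fun_prop
    · exact (hc'.norm).mul_left
  exact hF.comp (by fun_prop)
end
end
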